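/- arXiv:2002.07256 — 3 statements merged into one kernel-verified Lean document; each statement's English description precedes it below -/
import Mathlib

section
/- Let k ≥ 2 be a natural number, let h : ℕ → ℚ be a k-automatic sequence taking nonnegative rational values, and let s(n) = ∑_{j<n} h(j). Then the limit superior limsup_{n→∞} s(n)/n is a rational number; that is, there exists q ∈ ℚ such that limsup_{n→∞} s(n)/n = q. -/
open Filter

/-- A sequence `h : ℕ → Δ` is `k`-automatic if there is a DFAO (finite state set `Q`,
initial state `q₀`, transition function `δ`, output function `τ`) computing `h n` by
reading the base-`k` digits of `n` from the most significant digit to the least. -/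
def IsAutomaticSeq {Δ : Type*} (k : ℕ) (h : ℕ → Δ) : Prop :=
  ∃ (Q : Type) (_ : Fintype Q) (q₀ : Q) (δ : Q → ℕ → Q) (τ : Q → Δ),
    ∀ n : ℕ, h n = τ (((Nat.digits k n).reverse).foldl δ q₀)

/-!
Let `T` be the transfer operator of the automaton, averaging a function of the state over the next
digit. Replacing `k` by a power, one may assume that the support of `T` is idempotent, so that `1`
is the only eigenvalue of `T` on the unit circle. Then the output function splits as
`v + (T y - y)` with `T v = v`, and since `T ^ m (T y - y) → 0`, the second term contributes only
`o(n)` to the partial sums. The partial sums `S` of `v` satisfy an exact recurrence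
`S (K * n + d) = K * S n + c (st n) d`, where `st n` is the state of `n`. Their growth rate is thus
the value of a discounted decision problem in which the digits are the actions. An optimum is
attained by choosing a leading digit and then each further digit as a function of the state only.
For each of these finitely many choices the rate is a ratio of solutions of linear systems with
rational coefficients.
-/

open Finset Asymptotics
open scoped Topology

variable {Q : Type*}

section Markov

variable {T : Module.End ℝ (Q → ℝ)}

/-- `T` is a Markov operator on the functions on a finite set, i.e. it is positive and `T 1 = 1`.
Both properties are encoded in the preservation of constant upper bounds. -/
def IsMarkov (T : Module.End ℝ (Q → ℝ)) : Prop :=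
  ∀ f : Q → ℝ, ∀ a, (∀ q, f q ≤ a) → ∀ q, T f q ≤ a

/-- A point at which `T f` attains an upper bound of `f` stays such a point under a further
application of `T`. For a stochastic matrix this says that its support is closed under composition,
which excludes eigenvalues other than `1` on the unit circle. -/
def IsAbsorbing (T : Module.End ℝ (Q → ℝ)) : Prop :=
  ∀ f : Q → ℝ, ∀ a, (∀ q, f q ≤ a) → ∀ q, T f q = a → T (T f) q = a

namespace IsMarkov

theorem norm_apply_le [Fintype Q] (hT : IsMarkov T) (f : Q → ℝ) : ‖T f‖ ≤ ‖f‖ := by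
  refine (pi_norm_le_iff_of_nonneg (norm_nonneg f)).2 fun q => abs_le.2 ⟨?_, ?_⟩
  · have hneg := hT (-f) ‖f‖ (fun r => (neg_le_abs _).trans (norm_le_pi_norm f r)) q
    rw [map_neg, Pi.neg_apply] at hneg
    exact neg_le.1 hneg
  · exact hT f ‖f‖ (fun r => (le_abs_self _).trans (norm_le_pi_norm f r)) q

theorem norm_pow_apply_le [Fintype Q] (hT : IsMarkov T) (m : ℕ) (f : Q → ℝ) :
    ‖(T ^ m) f‖ ≤ ‖f‖ := by
  induction m with
  | zero => rw [pow_zero, Module.End.one_apply]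
  | succ m ih => rw [pow_succ', Module.End.mul_apply]; exact (hT.norm_apply_le _).trans ih

theorem nonpos_of_forall_le_pow_apply_sub [Finite Q] (hT : IsMarkov T) {y : Q → ℝ} {q : Q}
    {a : ℝ} (ha : ∀ j, a ≤ (T ^ j) (T y - y) q) : a ≤ 0 := by
  have := Fintype.ofFinite Q
  have hbound (N : ℕ) : N * a ≤ 2 * ‖y‖ := calc
    N * a = ∑ _j ∈ range N, a := by simp
    _ ≤ ∑ j ∈ range N, (T ^ j) (T y - y) q := sum_le_sum fun j _ => ha j
    _ = ∑ j ∈ range N, ((T ^ (j + 1)) y q - (T ^ j) y q) := by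
      simp only [map_sub, pow_succ, Module.End.mul_apply, Pi.sub_apply]
    _ = (T ^ N) y q - y q := by simp [sum_range_sub fun j => (T ^ j) y q]
    _ ≤ ‖(T ^ N) y‖ + ‖y‖ := by
      linarith [le_of_abs_le (norm_le_pi_norm ((T ^ N) y) q),
        neg_le_of_abs_le (norm_le_pi_norm y q)]
    _ ≤ 2 * ‖y‖ := by linarith [hT.norm_pow_apply_le N y]
  by_contra! hpos
  obtain ⟨N, hN⟩ := exists_nat_gt (2 * ‖y‖ / a)
  exact absurd (hbound N) (not_le.2 ((div_lt_iff₀ hpos).1 hN))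

theorem apply_sub_eq_zero_of_apply_eq_norm [Fintype Q] (hT : IsMarkov T) (habs : IsAbsorbing T)
    {y : Q → ℝ} {q : Q} (hq : T (T y - y) q = ‖T y - y‖) : T y - y = 0 := by
  have hconst (j : ℕ) : (T ^ (j + 1)) (T y - y) q = ‖T y - y‖ := by
    induction j with
    | zero => simpa using hq
    | succ j ih =>
      rw [pow_succ', Module.End.mul_apply] at ih ⊢
      rw [pow_succ', Module.End.mul_apply]
      refine habs _ _ (fun r => ?_) q ih
      exact (le_of_abs_le (norm_le_pi_norm ((T ^ j) (T y - y)) r)).trans (hT.norm_pow_apply_le j _)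
  refine norm_le_zero_iff.1 (hT.nonpos_of_forall_le_pow_apply_sub (y := T y) (q := q) fun j => ?_)
  rw [← map_sub, ← Module.End.mul_apply, ← pow_succ, hconst]

theorem apply_sub_eq_zero_of_norm_apply_eq [Fintype Q] (hT : IsMarkov T) (habs : IsAbsorbing T)
    {y : Q → ℝ} (hy : ‖T (T y - y)‖ = ‖T y - y‖) : T y - y = 0 := by
  cases isEmpty_or_nonempty Q
  · exact Subsingleton.elim _ _
  obtain ⟨q, hmax⟩ := Finite.exists_max fun q => |T (T y - y) q|
  have hq : |T (T y - y) q| = ‖T y - y‖ := hy ▸ le_antisymm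
    (norm_le_pi_norm (T (T y - y)) q) ((pi_norm_le_iff_of_nonneg (abs_nonneg _)).2 hmax)
  rcases abs_choice (T (T y - y) q) with hsign | hsign
  · exact hT.apply_sub_eq_zero_of_apply_eq_norm habs (hsign.symm.trans hq)
  · have hneg : T (-y) - -y = -(T y - y) := by rw [map_neg]; abel
    rw [← neg_eq_zero, ← hneg]
    refine hT.apply_sub_eq_zero_of_apply_eq_norm habs (q := q) ?_
    rw [hneg, map_neg, norm_neg, Pi.neg_apply, ← hsign, hq]

-- A limit point `w` of the sequence has `‖T w‖ = ‖w‖`, since the norms along it decrease; moreover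
-- `w` is again in the range of `T - 1`, hence `w = 0`.
theorem tendsto_pow_apply_sub [Finite Q] (hT : IsMarkov T) (habs : IsAbsorbing T) (y : Q → ℝ) :
    Tendsto (fun m => (T ^ m) (T y - y)) atTop (𝓝 0) := by
  have := Fintype.ofFinite Q
  have hcomm (m : ℕ) : (T ^ m) (T y - y) = T ((T ^ m) y) - (T ^ m) y := by
    rw [map_sub, ← Module.End.mul_apply, ← Module.End.mul_apply, ← pow_succ, ← pow_succ']
  have hanti : Antitone fun m => ‖(T ^ m) (T y - y)‖ := antitone_nat_of_succ_le fun m => by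
    rw [pow_succ', Module.End.mul_apply]; exact hT.norm_apply_le _
  obtain ⟨L, hL⟩ : ∃ L, Tendsto (fun m => ‖(T ^ m) (T y - y)‖) atTop (𝓝 L) :=
    ⟨_, tendsto_atTop_ciInf hanti ⟨0, by rintro _ ⟨m, rfl⟩; exact norm_nonneg _⟩⟩
  obtain ⟨y', -, φ, hφ, hy'⟩ := (isCompact_closedBall (0 : Q → ℝ) ‖y‖).tendsto_subseq
    (x := fun m => (T ^ m) y) fun m => mem_closedBall_zero_iff.2 (hT.norm_pow_apply_le m y)
  have hcont : Continuous T := T.continuous_of_finiteDimensional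
  have hsub : Tendsto (fun i => (T ^ φ i) (T y - y)) atTop (𝓝 (T y' - y')) := by
    simp only [hcomm]
    exact ((hcont.tendsto y').comp hy').sub hy'
  have hnorm : ‖T y' - y'‖ = L :=
    tendsto_nhds_unique hsub.norm (hL.comp hφ.tendsto_atTop)
  have hnorm_apply : ‖T (T y' - y')‖ = L := by
    refine tendsto_nhds_unique ((hcont.tendsto _).comp hsub).norm ?_
    refine (hL.comp (tendsto_add_atTop_nat 1 |>.comp hφ.tendsto_atTop)).congr fun i => ?_
    simp only [Function.comp_apply, pow_succ', Module.End.mul_apply]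
  have hzero := hT.apply_sub_eq_zero_of_norm_apply_eq habs (hnorm_apply.trans hnorm.symm)
  rw [hzero, norm_zero] at hnorm
  exact tendsto_zero_iff_norm_tendsto_zero.2 (hnorm ▸ hL)

end IsMarkov

end Markov

section DigitAverage

/-- `st n` is the state reached by an automaton with transition function `δ` on the base-`k`
digits of `n`, and leading zeros do not change it. -/
def TracksDigits (k : ℕ) (δ : Q → ℕ → Q) (st : ℕ → Q) : Prop :=
  ∀ n, ∀ d < k, st (k * n + d) = δ (st n) d

/-- The transition function of the automaton reading `p` base-`k` digits at a time, that is, one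
base-`k ^ p` digit. -/
def blockStep (k : ℕ) (δ : Q → ℕ → Q) : ℕ → Q → ℕ → Q
  | 0, q, _ => q
  | p + 1, q, d => δ (blockStep k δ p q (d / k)) (d % k)

/-- The transfer operator of the automaton: `f` is averaged over the states reached by reading one
uniformly random digit. -/
def digitAvg (𝕜 : Type*) [Field 𝕜] (k : ℕ) (δ : Q → ℕ → Q) : Module.End 𝕜 (Q → 𝕜) where
  toFun f q := (∑ d ∈ range k, f (δ q d)) / k
  map_add' f g := by ext q; simp only [Pi.add_apply, sum_add_distrib, add_div]
  map_smul' c f := by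
    ext q; simp only [Pi.smul_apply, smul_eq_mul, ← mul_sum, mul_div_assoc, RingHom.id_apply]

/-- The states from which reading one digit, whichever it is, leads into a given set. Its powers
describe where the powers of `digitAvg` attain an upper bound. -/
def digitPreimage (k : ℕ) (δ : Q → ℕ → Q) : Function.End (Set Q) :=
  fun U => {q | ∀ d < k, δ q d ∈ U}

theorem sum_range_mul_eq_sum_sum {M : Type*} [AddCommMonoid M] (g : ℕ → M) (k n : ℕ) :
    ∑ j ∈ range (k * n), g j = ∑ i ∈ range n, ∑ d ∈ range k, g (k * i + d) := by
  induction n with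
  | zero => simp
  | succ n ih => rw [Nat.mul_succ, sum_range_add, ih, sum_range_succ]

theorem exists_isIdempotentElem_pow {M : Type*} [Monoid M] [Finite M] (a : M) :
    ∃ p ≠ 0, IsIdempotentElem (a ^ p) := by
  let _ : TopologicalSpace M := ⊥
  have : DiscreteTopology M := ⟨rfl⟩
  obtain ⟨_, ⟨p, hp, rfl⟩, hidem⟩ := exists_idempotent_in_compact_subsemigroup
    (fun _ => continuous_of_discreteTopology) {b : M | ∃ p ≠ 0, a ^ p = b}
    ⟨a, 1, one_ne_zero, pow_one a⟩ (Set.toFinite _).isCompact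
    (by rintro _ ⟨p, hp, rfl⟩ _ ⟨r, -, rfl⟩; exact ⟨p + r, by omega, pow_add a p r⟩)
  exact ⟨p, hp, hidem⟩

variable {k : ℕ} {δ : Q → ℕ → Q} {st : ℕ → Q}

theorem digitAvg_apply {𝕜 : Type*} [Field 𝕜] (f : Q → 𝕜) (q : Q) :
    digitAvg 𝕜 k δ f q = (∑ d ∈ range k, f (δ q d)) / k := rfl

theorem map_digitAvg {𝕜 𝕜' : Type*} [Field 𝕜] [Field 𝕜'] (φ : 𝕜 →+* 𝕜') (f : Q → 𝕜) :
    digitAvg 𝕜' k δ (φ ∘ f) = φ ∘ digitAvg 𝕜 k δ f := by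
  ext q
  simp only [digitAvg_apply, Function.comp_apply, map_div₀, map_sum, map_natCast]

theorem isMarkov_digitAvg (hk : k ≠ 0) : IsMarkov (digitAvg ℝ k δ) := by
  intro f a hf q
  rw [digitAvg_apply, div_le_iff₀ (by positivity), mul_comm, ← nsmul_eq_mul]
  simpa using sum_le_card_nsmul (range k) (fun d => f (δ q d)) a fun d _ => hf _

theorem digitAvg_apply_eq_iff (hk : k ≠ 0) {f : Q → ℝ} {a : ℝ} (hf : ∀ q, f q ≤ a) {q : Q} :
    digitAvg ℝ k δ f q = a ↔ ∀ d < k, f (δ q d) = a := by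
  have hsum := sum_eq_sum_iff_of_le (s := range k) (f := fun d => f (δ q d)) (g := fun _ => a)
    fun d _ => hf _
  rw [sum_const, card_range, nsmul_eq_mul] at hsum
  rw [digitAvg_apply, div_eq_iff (by positivity), mul_comm a, hsum]
  simp only [mem_range]

theorem setOf_digitAvg_pow_apply_eq (hk : k ≠ 0) {f : Q → ℝ} {a : ℝ} (hf : ∀ q, f q ≤ a)
    (m : ℕ) :
    {q | (digitAvg ℝ k δ ^ m) f q = a} = (digitPreimage k δ ^ m) {q | f q = a} := by
  induction m generalizing f with
  | zero => rfl
  | succ m ih =>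
    have hone : {q | digitAvg ℝ k δ f q = a} = digitPreimage k δ {q | f q = a} :=
      Set.ext fun q => digitAvg_apply_eq_iff hk hf
    have hpow := ih (isMarkov_digitAvg (δ := δ) hk f a hf)
    rw [hone] at hpow
    rw [pow_succ, pow_succ]
    exact hpow

theorem exists_isAbsorbing_digitAvg_pow [Finite Q] (hk : k ≠ 0) (δ : Q → ℕ → Q) :
    ∃ p ≠ 0, IsAbsorbing (digitAvg ℝ k δ ^ p) := by
  have : Finite (Function.End (Set Q)) := inferInstanceAs (Finite (Set Q → Set Q))
  obtain ⟨p, hp, hidem⟩ := exists_isIdempotentElem_pow (digitPreimage k δ)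
  refine ⟨p, hp, fun f a hf q hq => ?_⟩
  have htwice : {q | (digitAvg ℝ k δ ^ (p + p)) f q = a} = {q | (digitAvg ℝ k δ ^ p) f q = a} := by
    rw [setOf_digitAvg_pow_apply_eq hk hf, setOf_digitAvg_pow_apply_eq hk hf, pow_add, hidem.eq]
  rw [pow_add] at htwice
  exact htwice.ge hq

theorem digitAvg_blockStep {𝕜 : Type*} [Field 𝕜] (k : ℕ) (δ : Q → ℕ → Q) (p : ℕ) :
    digitAvg 𝕜 (k ^ p) (blockStep k δ p) = digitAvg 𝕜 k δ ^ p := by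
  induction p with
  | zero => ext f q; simp [digitAvg_apply, blockStep]
  | succ p ih =>
    refine LinearMap.ext fun f => funext fun q => ?_
    have hblock (i : ℕ) : ∑ d ∈ range k, f (blockStep k δ (p + 1) q (k * i + d)) =
        ∑ d ∈ range k, f (δ (blockStep k δ p q i) d) := by
      refine sum_congr rfl fun d hd => ?_
      have hdk := mem_range.1 hd
      rw [blockStep, Nat.mul_add_div (by omega), Nat.div_eq_of_lt hdk, add_zero, Nat.mul_add_mod,
        Nat.mod_eq_of_lt hdk]
    rw [pow_succ (digitAvg 𝕜 k δ), Module.End.mul_apply, ← ih, digitAvg_apply, digitAvg_apply,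
      pow_succ' k, sum_range_mul_eq_sum_sum]
    simp only [hblock, digitAvg_apply, ← sum_div, Nat.cast_mul, div_div]

namespace TracksDigits

theorem blockStep (hst : TracksDigits k δ st) (p : ℕ) :
    TracksDigits (k ^ p) (blockStep k δ p) st := by
  induction p with
  | zero =>
    intro n d hd
    obtain rfl : d = 0 := by simpa using hd
    simp [_root_.blockStep]
  | succ p ih =>
    intro n d hd
    have hk : 0 < k := Nat.pos_of_ne_zero fun h0 => by simp [h0] at hd
    have hdiv : d / k < k ^ p := Nat.div_lt_of_lt_mul (by rwa [← pow_succ'])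
    rw [_root_.blockStep, ← ih n _ hdiv, ← hst _ _ (Nat.mod_lt d hk)]
    congr 1
    calc k ^ (p + 1) * n + d = k * (k ^ p * n) + (k * (d / k) + d % k) := by
          rw [Nat.div_add_mod, pow_succ', mul_assoc]
      _ = k * (k ^ p * n + d / k) + d % k := by ring

theorem sum_range_mul_add {𝕜 : Type*} [Field 𝕜] (hst : TracksDigits k δ st) (hk : (k : 𝕜) ≠ 0)
    (f : Q → 𝕜) (n : ℕ) {d : ℕ} (hd : d < k) :
    ∑ j ∈ range (k * n + d), f (st j) =
      k * ∑ j ∈ range n, digitAvg 𝕜 k δ f (st j) + ∑ x ∈ range d, f (δ (st n) x) := by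
  rw [sum_range_add, sum_range_mul_eq_sum_sum, mul_sum]
  congr 1
  · refine sum_congr rfl fun i _ => ?_
    rw [digitAvg_apply, mul_div_cancel₀ _ hk]
    exact sum_congr rfl fun x hx => by rw [hst _ _ (mem_range.1 hx)]
  · exact sum_congr rfl fun x hx => by rw [hst _ _ ((mem_range.1 hx).trans hd)]

theorem abs_sum_range_le [Fintype Q] (hst : TracksDigits k δ st) (hk : k ≠ 0) (f : Q → ℝ) (n : ℕ) :
    |∑ j ∈ range n, f (st j)| ≤ ‖digitAvg ℝ k δ f‖ * n + k * ‖f‖ := by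
  have hsum_le (g : Q → ℝ) (s : ℕ → Q) (m : ℕ) : |∑ j ∈ range m, g (s j)| ≤ m * ‖g‖ := by
    simpa using norm_sum_le_of_le (range m) fun j _ => norm_le_pi_norm g (s j)
  have hmod := Nat.mod_lt n (Nat.pos_of_ne_zero hk)
  have hdiv : (k : ℝ) * (n / k : ℕ) ≤ n := by exact_mod_cast Nat.mul_div_le n k
  have hmod_le : ((n % k : ℕ) : ℝ) ≤ k := by exact_mod_cast hmod.le
  conv_lhs => rw [← Nat.div_add_mod n k, hst.sum_range_mul_add (by positivity) f _ hmod]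
  calc |k * ∑ j ∈ range (n / k), digitAvg ℝ k δ f (st j) +
          ∑ x ∈ range (n % k), f (δ (st (n / k)) x)|
      ≤ k * |∑ j ∈ range (n / k), digitAvg ℝ k δ f (st j)| +
          |∑ x ∈ range (n % k), f (δ (st (n / k)) x)| := by
        rw [← Nat.abs_cast k, ← abs_mul, Nat.abs_cast]; exact abs_add_le _ _
    _ ≤ k * ((n / k : ℕ) * ‖digitAvg ℝ k δ f‖) + (n % k : ℕ) * ‖f‖ := by
        gcongr <;> apply hsum_le
    _ = ‖digitAvg ℝ k δ f‖ * (k * (n / k : ℕ)) + (n % k : ℕ) * ‖f‖ := by ring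
    _ ≤ ‖digitAvg ℝ k δ f‖ * n + k * ‖f‖ := by gcongr

theorem isLittleO_sum_range [Finite Q] (hst : TracksDigits k δ st) (hk : k ≠ 0) {f : Q → ℝ}
    (hf : Tendsto (fun m => (digitAvg ℝ k δ ^ m) f) atTop (𝓝 0)) :
    (fun n => ∑ j ∈ range n, f (st j)) =o[atTop] fun n => (n : ℝ) := by
  have := Fintype.ofFinite Q
  refine isLittleO_iff.2 fun ε hε => ?_
  obtain ⟨m, hm⟩ := (hf.norm.eventually_le_const (u := ε / 2) (by simpa using hε)).exists
  have hconst := (tendsto_natCast_atTop_atTop (R := ℝ)).eventually_ge_atTop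
    ((k ^ m : ℕ) * ‖f‖ / (ε / 2))
  filter_upwards [hconst] with n hn
  have hbound := (hst.blockStep m).abs_sum_range_le (pow_ne_zero m hk) f n
  rw [digitAvg_blockStep] at hbound
  rw [div_le_iff₀ (half_pos hε)] at hn
  rw [Real.norm_eq_abs, Real.norm_eq_abs, Nat.abs_cast]
  calc |∑ j ∈ range n, f (st j)| ≤ ‖(digitAvg ℝ k δ ^ m) f‖ * n + (k ^ m : ℕ) * ‖f‖ := hbound
    _ ≤ ε / 2 * n + n * (ε / 2) := by gcongr
    _ = ε * n := by ring

end TracksDigits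

theorem exists_fixed_add_coboundary [Finite Q] {F : Type*} [Field F] [Algebra F ℝ] (hk : k ≠ 0)
    (habs : IsAbsorbing (digitAvg ℝ k δ)) (f : Q → F) :
    ∃ v y, digitAvg F k δ v = v ∧ f = v + (digitAvg F k δ y - y) := by
  have := Fintype.ofFinite Q
  let L : Module.End F (Q → F) := digitAvg F k δ - 1
  have hdisj : Disjoint (LinearMap.ker L) (LinearMap.range L) := by
    rw [Submodule.disjoint_def]
    rintro _ hu ⟨y, rfl⟩
    have hfix : digitAvg F k δ (L y) = L y := sub_eq_zero.1 hu
    have hmap : digitAvg ℝ k δ (algebraMap F ℝ ∘ y) - algebraMap F ℝ ∘ y =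
        algebraMap F ℝ ∘ L y := by
      rw [map_digitAvg]; ext q; simp [L]
    have hzero := (isMarkov_digitAvg hk).apply_sub_eq_zero_of_norm_apply_eq habs
      (y := algebraMap F ℝ ∘ y) (by rw [hmap, map_digitAvg, hfix])
    rw [hmap] at hzero
    exact funext fun q => (map_eq_zero (algebraMap F ℝ)).1 (congrFun hzero q)
  have htop := Submodule.eq_top_of_disjoint _ _
    (by rw [add_comm]; exact (LinearMap.finrank_range_add_finrank_ker L).ge) hdisj
  obtain ⟨v, hv, _, ⟨y, rfl⟩, hvy⟩ := Submodule.mem_sup.1 (htop ▸ Submodule.mem_top (x := f))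
  exact ⟨v, y, sub_eq_zero.1 hv, hvy.symm⟩

end DigitAverage

section Policy

variable [Finite Q]

theorem nonneg_of_comp_le_mul {K : ℝ} (hK : 1 < K) {σ : Q → Q} {w : Q → ℝ}
    (hw : ∀ q, w (σ q) ≤ K * w q) (q : Q) : 0 ≤ w q := by
  have : Nonempty Q := ⟨q⟩
  obtain ⟨m, hmin⟩ := Finite.exists_min w
  have hm : w m ≤ K * w m := (hmin _).trans (hw m)
  exact (show 0 ≤ w m by nlinarith).trans (hmin q)

theorem exists_discounted_solution {F : Type*} [Field F] [Algebra F ℝ] {K : ℕ} (hK : 1 < K)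
    (σ : Q → Q) (b : Q → F) : ∃ x : Q → F, ∀ q, K * x q = b q + x (σ q) := by
  let L : Module.End F (Q → F) := (K : F) • 1 - LinearMap.funLeft F F σ
  have hinj : Function.Injective L := by
    refine (injective_iff_map_eq_zero L).2 fun x hx => funext fun q => ?_
    have hreal (q : Q) : algebraMap F ℝ (x (σ q)) = K * algebraMap F ℝ (x q) := by
      have hq : K * x q - x (σ q) = 0 := congrFun hx q
      rw [← sub_eq_zero.1 hq, map_mul, map_natCast]
    have hK' : (1 : ℝ) < K := by exact_mod_cast hK
    have hnonneg := nonneg_of_comp_le_mul hK' (w := fun q => algebraMap F ℝ (x q))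
      (fun q => (hreal q).le) q
    have hnonpos := nonneg_of_comp_le_mul hK' (w := fun q => -algebraMap F ℝ (x q))
      (fun q => by rw [hreal, mul_neg]) q
    exact (map_eq_zero (algebraMap F ℝ)).1 (le_antisymm (neg_nonneg.1 hnonpos) hnonneg)
  obtain ⟨x, hx⟩ := LinearMap.injective_iff_surjective.1 hinj b
  exact ⟨x, fun q => sub_eq_iff_eq_add.1 (congrFun hx q)⟩

-- Policy improvement: replacing the action at a single state where optimality fails increases the
-- value there and decreases it nowhere.
theorem exists_optimal_policy {ι : Type*} [Finite ι] [Nonempty ι] {K : ℝ} (hK : 1 < K)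
    {step : Q → ι → Q} {r : Q → ι → ℝ} {g : (Q → ι) → Q → ℝ}
    (hg : ∀ D q, K * g D q = r q (D q) + g D (step q (D q))) :
    ∃ D, ∀ q i, r q i + g D (step q i) ≤ K * g D q := by
  classical
  have := Fintype.ofFinite Q
  obtain ⟨D, hmax⟩ := Finite.exists_max fun D => ∑ q, g D q
  refine ⟨D, ?_⟩
  by_contra! hviol
  obtain ⟨q₀, i₀, hlt⟩ := hviol
  let D' := Function.update D q₀ i₀
  have hD' : D' q₀ = i₀ := Function.update_self ..
  have hcomp (q : Q) : (g D' - g D) (step q (D' q)) ≤ K * (g D' - g D) q := by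
    simp only [Pi.sub_apply, mul_sub, hg D']
    rcases eq_or_ne q q₀ with rfl | hq
    · rw [hD']; linarith
    · rw [show D' q = D q from Function.update_of_ne hq .., hg D]; linarith
  have hnonneg := nonneg_of_comp_le_mul hK hcomp
  have hpos : g D q₀ < g D' q₀ := by
    have hstep := hnonneg (step q₀ i₀)
    have heq := hg D' q₀
    rw [Pi.sub_apply] at hstep
    rw [hD'] at heq
    nlinarith
  exact (hmax D').not_gt
    (sum_lt_sum (fun q _ => sub_nonneg.1 (hnonneg q)) ⟨q₀, mem_univ q₀, hpos⟩)

end Policy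

section Growth

/-- `β` is the upper linear growth rate of `S`, in the strong sense that `S n` is eventually at most
`β * n` and infinitely often at least `β * n`, both up to a bounded error. -/
def IsUpperGrowthRate (S : ℕ → ℝ) (β : ℝ) : Prop :=
  (∃ C, ∀ᶠ n in atTop, S n ≤ β * n + C) ∧ ∃ C, ∃ᶠ n in atTop, β * n - C ≤ S n

/-- The deviation of `S n` from `β * n`, corrected by a function of the state of `n`. The correction
`g` is chosen to make the deviation (sub- or super-)multiplicative under appending digits. -/
def potential (S : ℕ → ℝ) (st : ℕ → Q) (β : ℝ) (g : Q → ℝ) (n : ℕ) : ℝ :=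
  S n - β * n + g (st n)

theorem nonpos_of_mul_add_le {K : ℕ} (hK : 2 ≤ K) {Φ : ℕ → ℝ}
    (hΦ : ∀ n, ∀ d < K, Φ (K * n + d) ≤ K * Φ n) (hbase : ∀ a < K, a ≠ 0 → Φ a ≤ 0)
    {n : ℕ} (hn : n ≠ 0) : Φ n ≤ 0 := by
  induction n using Nat.strongRecOn with
  | ind n ih =>
    rcases lt_or_ge n K with hlt | hge
    · exact hbase n hlt hn
    have hdiv : n / K ≠ 0 := (Nat.div_pos hge (by omega)).ne'
    calc Φ n = Φ (K * (n / K) + n % K) := by rw [Nat.div_add_mod]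
      _ ≤ K * Φ (n / K) := hΦ _ _ (Nat.mod_lt n (by omega))
      _ ≤ 0 := mul_nonpos_of_nonneg_of_nonpos (by positivity)
        (ih _ (Nat.div_lt_self (Nat.pos_of_ne_zero hn) hK) hdiv)

theorem frequently_eq_zero_of_mul_add_eq {K : ℕ} (hK : 2 ≤ K) {Φ : ℕ → ℝ} {d : ℕ → ℕ}
    (hΦ : ∀ n, Φ (K * n + d n) = K * Φ n) {a : ℕ} (ha : a ≠ 0) (hΦa : Φ a = 0) :
    ∃ᶠ n in atTop, Φ n = 0 := by
  have hexists (N : ℕ) : ∃ n, N < n ∧ Φ n = 0 := by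
    induction N with
    | zero => exact ⟨a, Nat.pos_of_ne_zero ha, hΦa⟩
    | succ N ih =>
      obtain ⟨n, hn, hzero⟩ := ih
      exact ⟨K * n + d n, by nlinarith, by rw [hΦ, hzero, mul_zero]⟩
  exact frequently_atTop.2 fun N => (hexists N).imp fun n hn => ⟨hn.1.le, hn.2⟩

variable {K : ℕ} {δ : Q → ℕ → Q} {st : ℕ → Q} {S : ℕ → ℝ} {c : Q → ℕ → ℝ}

theorem potential_mul_add (hst : TracksDigits K δ st)
    (hS : ∀ n, ∀ d < K, S (K * n + d) = K * S n + c (st n) d) (β : ℝ) (g : Q → ℝ) (n : ℕ)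
    {d : ℕ} (hd : d < K) :
    potential S st β g (K * n + d) = K * potential S st β g n +
      (c (st n) d - β * d + g (δ (st n) d) - K * g (st n)) := by
  simp only [potential, hS n d hd, hst n d hd]
  push_cast
  ring

theorem exists_eventually_le_mul_add [Finite Q] (hK : 2 ≤ K) (hst : TracksDigits K δ st)
    (hS : ∀ n, ∀ d < K, S (K * n + d) = K * S n + c (st n) d) {β : ℝ} {g : Q → ℝ}
    (hg : ∀ q, ∀ d < K, c q d - β * d + g (δ q d) ≤ K * g q)
    (hbase : ∀ a < K, a ≠ 0 → potential S st β g a ≤ 0) :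
    ∃ C, ∀ᶠ n in atTop, S n ≤ β * n + C := by
  have := Fintype.ofFinite Q
  refine ⟨‖g‖, (eventually_ne_atTop 0).mono fun n hn => ?_⟩
  have hpot := nonpos_of_mul_add_le hK (Φ := potential S st β g)
    (fun n d hd => by linarith [potential_mul_add hst hS β g n hd, hg (st n) d hd]) hbase hn
  rw [potential] at hpot
  linarith [neg_le_of_abs_le (norm_le_pi_norm g (st n))]

theorem exists_frequently_mul_sub_le [Finite Q] (hK : 2 ≤ K) (hst : TracksDigits K δ st)
    (hS : ∀ n, ∀ d < K, S (K * n + d) = K * S n + c (st n) d) {β : ℝ} {g : Q → ℝ}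
    {D : Q → Fin K} (hg : ∀ q, K * g q = c q (D q) - β * (D q : ℕ) + g (δ q (D q)))
    {a : ℕ} (ha : a ≠ 0) (hpot : potential S st β g a = 0) :
    ∃ C, ∃ᶠ n in atTop, β * n - C ≤ S n := by
  have := Fintype.ofFinite Q
  have hfreq := frequently_eq_zero_of_mul_add_eq hK (d := fun n => (D (st n) : ℕ))
    (fun n => by linarith [potential_mul_add hst hS β g n (D (st n)).2, hg (st n)]) ha hpot
  refine ⟨‖g‖, hfreq.mono fun n hn => ?_⟩
  rw [potential] at hn
  linarith [le_of_abs_le (norm_le_pi_norm g (st n))]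

-- Along the `n` obtained from the leading digit `a` by appending digits according to `D`, the limit
-- of `S n / n` is the displayed ratio, because `S n + x D (st n)` and `n + y D (st n)` are both
-- multiplied by `K` at each step. The growth rate is the largest of these finitely many limits.
theorem exists_isUpperGrowthRate_policy [Finite Q] (hK : 2 ≤ K) (hst : TracksDigits K δ st)
    (hS : ∀ n, ∀ d < K, S (K * n + d) = K * S n + c (st n) d) {x y : (Q → Fin K) → Q → ℝ}
    (hx : ∀ D q, K * x D q = c q (D q) + x D (δ q (D q)))
    (hy : ∀ D q, K * y D q = (D q : ℕ) + y D (δ q (D q))) :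
    ∃ (D : Q → Fin K) (a : ℕ),
      IsUpperGrowthRate S ((S a + x D (st a)) / (a + y D (st a))) := by
  have hK' : (1 : ℝ) < K := by exact_mod_cast hK
  have : Nonempty (Fin K) := ⟨⟨0, by omega⟩⟩
  have : Nonempty {a : ℕ // a < K ∧ a ≠ 0} := ⟨1, hK, one_ne_zero⟩
  have : Finite {a : ℕ // a < K ∧ a ≠ 0} := (Set.finite_lt_nat K).subset fun _ ha => ha.1
  have hden (D : Q → Fin K) {a : ℕ} (ha : a ≠ 0) : 0 < a + y D (st a) := by
    have hy_nonneg := nonneg_of_comp_le_mul hK' (w := y D) (σ := fun q => δ q (D q))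
      (fun q => by rw [hy]; exact le_add_of_nonneg_left (Nat.cast_nonneg _)) (st a)
    positivity
  obtain ⟨⟨D, a, haK, ha⟩, hmax⟩ := Finite.exists_max
    fun p : (Q → Fin K) × {a : ℕ // a < K ∧ a ≠ 0} =>
      (S p.2 + x p.1 (st p.2)) / (p.2 + y p.1 (st p.2))
  refine ⟨D, a, ?_⟩
  set β := (S a + x D (st a)) / (a + y D (st a)) with hβ
  have hg (E : Q → Fin K) (q : Q) : K * (x E - β • y E) q =
      c q (E q) - β * (E q : ℕ) + (x E - β • y E) (δ q (E q)) := by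
    simp only [Pi.sub_apply, Pi.smul_apply, smul_eq_mul]
    linear_combination hx E q - β * hy E q
  obtain ⟨E, hE⟩ := exists_optimal_policy hK' (step := fun q (i : Fin K) => δ q i)
    (r := fun q i => c q i - β * (i : ℕ)) hg
  refine ⟨exists_eventually_le_mul_add hK hst hS (fun q d hd => hE q ⟨d, hd⟩) fun b hbK hb => ?_,
    exists_frequently_mul_sub_le hK hst hS (hg D) ha ?_⟩
  · have hratio : (S b + x E (st b)) / (b + y E (st b)) ≤ β := hmax (E, ⟨b, hbK, hb⟩)
    rw [div_le_iff₀ (hden E hb)] at hratio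
    simp only [potential, Pi.sub_apply, Pi.smul_apply, smul_eq_mul]
    linarith
  · have hratio := (eq_div_iff (hden D ha).ne').1 hβ
    simp only [potential, Pi.sub_apply, Pi.smul_apply, smul_eq_mul]
    linarith

theorem exists_isUpperGrowthRate_algebraMap [Finite Q] {F : Type*} [Field F] [Algebra F ℝ]
    (hK : 2 ≤ K) (hst : TracksDigits K δ st) {S : ℕ → F} {c : Q → ℕ → F}
    (hS : ∀ n, ∀ d < K, S (K * n + d) = K * S n + c (st n) d) :
    ∃ β : F, IsUpperGrowthRate (fun n => algebraMap F ℝ (S n)) (algebraMap F ℝ β) := by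
  choose x hx using fun D : Q → Fin K =>
    exists_discounted_solution hK (fun q => δ q (D q)) fun q => c q (D q)
  choose y hy using fun D : Q → Fin K =>
    exists_discounted_solution hK (fun q => δ q (D q)) fun q => ((D q : ℕ) : F)
  obtain ⟨D, a, hrate⟩ := exists_isUpperGrowthRate_policy (S := fun n => algebraMap F ℝ (S n))
    (c := fun q d => algebraMap F ℝ (c q d)) (x := fun D q => algebraMap F ℝ (x D q))
    (y := fun D q => algebraMap F ℝ (y D q)) hK hst
    (fun n d hd => by rw [hS n d hd, map_add, map_mul, map_natCast])
    (fun D q => by rw [← map_add, ← hx, map_mul, map_natCast])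
    (fun D q => by rw [← map_natCast (algebraMap F ℝ), ← map_natCast (algebraMap F ℝ), ← map_add,
      ← hy, map_mul])
  refine ⟨(S a + x D (st a)) / (a + y D (st a)), ?_⟩
  simpa only [map_div₀, map_add, map_natCast] using hrate

theorem exists_isUpperGrowthRate_of_digitAvg_eq [Finite Q] {F : Type*} [Field F] [Algebra F ℝ]
    (hK : 2 ≤ K) (hst : TracksDigits K δ st) {v : Q → F} (hv : digitAvg F K δ v = v) :
    ∃ β : F, IsUpperGrowthRate (fun n => ∑ j ∈ range n, algebraMap F ℝ (v (st j)))
      (algebraMap F ℝ β) := by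
  have : CharZero F := (algebraMap F ℝ).charZero
  have hrec (n d : ℕ) (hd : d < K) : ∑ j ∈ range (K * n + d), v (st j) =
      K * ∑ j ∈ range n, v (st j) + ∑ i ∈ range d, v (δ (st n) i) := by
    rw [hst.sum_range_mul_add (Nat.cast_ne_zero.2 (by omega)) v n hd, hv]
  simpa only [map_sum] using exists_isUpperGrowthRate_algebraMap hK hst
    (S := fun n => ∑ j ∈ range n, v (st j)) (c := fun q d => ∑ i ∈ range d, v (δ q i)) hrec

end Growth

section Limsup

theorem limsup_eq_of_eventually_le_of_frequently_le {f g₁ g₂ : ℕ → ℝ} {β : ℝ}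
    (hg₁ : Tendsto g₁ atTop (𝓝 β)) (hle : ∀ᶠ n in atTop, f n ≤ g₁ n)
    (hg₂ : Tendsto g₂ atTop (𝓝 β)) (hge : ∃ᶠ n in atTop, g₂ n ≤ f n) :
    atTop.limsup f = β := by
  have hupper {b : ℝ} (hb : β < b) : ∀ᶠ n in atTop, f n ≤ b :=
    (hle.and (hg₁.eventually_le_const hb)).mono fun n hn => hn.1.trans hn.2
  have hlower {b : ℝ} (hb : b < β) : ∃ᶠ n in atTop, b ≤ f n :=
    (hge.and_eventually (hg₂.eventually_const_le hb)).mono fun n hn => hn.2.trans hn.1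
  have hbdd : IsBoundedUnder (· ≤ ·) atTop f := ⟨β + 1, hupper (lt_add_one β)⟩
  have hcobdd : IsCoboundedUnder (· ≤ ·) atTop f :=
    .of_frequently_ge (hlower (sub_one_lt β))
  exact le_antisymm (le_of_forall_gt_imp_ge_of_dense fun b hb => limsup_le_of_le hcobdd (hupper hb))
    (le_of_forall_lt_imp_le_of_dense fun b hb => le_limsup_of_frequently_le (hlower hb) hbdd)

theorem IsUpperGrowthRate.limsup_div_eq {S s : ℕ → ℝ} {β : ℝ} (hS : IsUpperGrowthRate S β)
    (hs : (fun n => s n - S n) =o[atTop] fun n => (n : ℝ)) :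
    atTop.limsup (fun n => s n / n) = β := by
  obtain ⟨⟨C₁, hle⟩, C₂, hge⟩ := hS
  have hlim (C : ℝ) : Tendsto (fun n : ℕ => β + C / n + (s n - S n) / n) atTop (𝓝 β) := by
    simpa using (tendsto_const_nhds.add (tendsto_const_div_atTop_nhds_zero_nat C)).add
      hs.tendsto_div_nhds_zero
  refine limsup_eq_of_eventually_le_of_frequently_le (hlim C₁) ?_ (hlim (-C₂)) ?_
  · filter_upwards [hle, eventually_gt_atTop 0] with n hn hpos
    field_simp
    linarith
  · refine (hge.and_eventually (eventually_gt_atTop 0)).mono fun n hn => ?_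
    have hpos := hn.2
    field_simp
    linarith [hn.1]

end Limsup

-- The extra state `none` stands for `0` and ignores leading zeros.
theorem IsAutomaticSeq.exists_tracksDigits {Δ : Type*} {k : ℕ} (hk : 2 ≤ k) {h : ℕ → Δ}
    (hauto : IsAutomaticSeq k h) :
    ∃ (Q : Type) (_ : Finite Q) (δ : Q → ℕ → Q) (st : ℕ → Q) (τ : Q → Δ),
      TracksDigits k δ st ∧ ∀ n, h n = τ (st n) := by
  obtain ⟨Q, _, q₀, δ, τ, hτ⟩ := hauto
  refine ⟨Option Q, inferInstance,
    fun o d => o.elim (if d = 0 then none else some (δ q₀ d)) fun q => some (δ q d),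
    fun n => if n = 0 then none else some ((Nat.digits k n).reverse.foldl δ q₀),
    fun o => o.elim (τ q₀) τ, fun n d hd => ?_, fun n => ?_⟩
  · rcases eq_or_ne n 0 with rfl | hn
    · rcases eq_or_ne d 0 with rfl | hd0
      · simp
      · simp [hd0, Nat.digits_of_lt k d hd0 hd]
    · have hdigits : Nat.digits k (k * n + d) = d :: Nat.digits k n := by
        rw [add_comm, Nat.digits_add k (by omega) d n hd (.inr hn)]
      simp [hn, hdigits, show k ≠ 0 by omega]
  · rcases eq_or_ne n 0 with rfl | hn
    · simp [hτ 0]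
    · simp [hn, hτ n]

theorem upper_density_partial_sums_rational_general {F : Type*} [Field F] [Algebra F ℝ] {k : ℕ}
    (hk : 2 ≤ k) {h : ℕ → F} (hauto : IsAutomaticSeq k h) :
    ∃ q : F, atTop.limsup (fun n : ℕ => (∑ j ∈ range n, algebraMap F ℝ (h j)) / n) =
      algebraMap F ℝ q := by
  obtain ⟨Q, _, δ, st, τ, hst, hτ⟩ := hauto.exists_tracksDigits hk
  obtain ⟨p, hp, habs⟩ := exists_isAbsorbing_digitAvg_pow (by omega : k ≠ 0) δ
  rw [← digitAvg_blockStep] at habs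
  have hK : 2 ≤ k ^ p := hk.trans (Nat.le_self_pow hp k)
  have hK0 : k ^ p ≠ 0 := by omega
  have hblock := hst.blockStep p
  obtain ⟨v, y, hv, hvy⟩ := exists_fixed_add_coboundary hK0 habs τ
  obtain ⟨β, hβ⟩ := exists_isUpperGrowthRate_of_digitAvg_eq hK hblock hv
  refine ⟨β, hβ.limsup_div_eq ?_⟩
  have hlittleO := hblock.isLittleO_sum_range hK0
    ((isMarkov_digitAvg hK0).tendsto_pow_apply_sub habs (algebraMap F ℝ ∘ y))
  refine hlittleO.congr_left fun n => ?_
  rw [← sum_sub_distrib]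
  refine sum_congr rfl fun j _ => ?_
  simp [hτ, hvy, map_digitAvg]

theorem upper_density_partial_sums_rational
    (k : ℕ) (hk : 2 ≤ k) (h : ℕ → ℚ) (hauto : IsAutomaticSeq k h)
    (hnn : ∀ n, 0 ≤ h n)
    (s : ℕ → ℚ) (hs : ∀ n, s n = ∑ j ∈ Finset.range n, h j) :
    ∃ q : ℚ, Filter.atTop.limsup (fun n : ℕ => (s n : ℝ) / n) = (q : ℝ) := by
  simpa [hs] using upper_density_partial_sums_rational_general hk hauto
end

section
/- Let k ≥ 2 be a natural number and let S ⊆ ℕ be a k-automatic set. Then the lower density of S, liminf_{N→∞} π_S(N)/N, is a rational number. -/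
open Filter

/-- A set `S ⊆ ℕ` is `k`-automatic if its characteristic function is `k`-automatic. -/
def IsAutomaticSet (k : ℕ) (S : Set ℕ) : Prop :=
  IsAutomaticSeq k (S.indicator fun _ => (1 : ℕ))

/-- `piCount S N` is the number of elements of `S` that are less than `N`. -/
noncomputable def piCount (S : Set ℕ) (N : ℕ) : ℕ := (S ∩ Set.Iio N).ncard

/-!
Let `r N` be the state of the automaton after reading `N`, and let `P` be the Markov matrix of a
uniformly random digit. Some power `A = P ^ p` dominates a positive multiple of each of its own
powers, and then every rational vector splits as `a + (A b - b)` with `A a = a` and `a` rational.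
The part `A b - b` contributes `o(N)` to the partial sums. For the fixed part, the partial sums
`C` satisfy an exact recursion `C (K N + d) = K C N + γ (r N) d` with `K = k ^ p`. Subtracting
`α N`, where `α` is the liminf, and adding the solution `W (r N)` of a discounted Bellman
equation gives `Φ N` with `Φ (K N + d) ≥ K Φ N`, with equality for some digit `d`; such a `Φ`
with `liminf Φ N / N = 0` vanishes infinitely often. Two zeros of `Φ` sharing the same state
express `α` as a quotient of rationals.
-/

open scoped Topology Matrix

namespace AutomaticDensity

lemma exists_forall_abs_le {ι 𝕜 : Type*} [Finite ι] [AddCommGroup 𝕜] [LinearOrder 𝕜]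
    [IsOrderedAddMonoid 𝕜] (f : ι → 𝕜) : ∃ B, ∀ i, |f i| ≤ B :=
  (Finite.bddAbove_range (|f ·|)).imp fun _ h i => h ⟨i, rfl⟩

lemma exists_pos_forall_mul_eq_of_succ {α : Type*} [Finite α] {f : ℕ → α}
    (hf : ∀ a b, f a = f b → f (a + 1) = f (b + 1)) :
    ∃ p, 0 < p ∧ ∀ m, 0 < m → f (p * m) = f p := by
  obtain ⟨a, b, hab, hfab⟩ := Finite.exists_ne_map_eq_of_infinite f
  wlog hlt : a < b generalizing a b
  · exact this b a hab.symm hfab.symm (by lia)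
  obtain ⟨t, rfl⟩ := Nat.exists_eq_add_of_lt hlt
  have hper : Function.Periodic (fun j => f (a + j)) (t + 1) := by
    intro j
    induction j with
    | zero => simpa [add_assoc] using hfab.symm
    | succ j ih => simpa [add_assoc, add_comm, add_left_comm] using hf _ _ ih
  refine ⟨(a + 1) * (t + 1), by positivity, fun m hm => ?_⟩
  obtain ⟨l, rfl⟩ := Nat.exists_eq_add_of_lt hm
  have := hper.nat_mul ((a + 1) * l) (a * t + t + 1)
  simp only [Nat.cast_id] at this
  convert this using 2 <;> ring

section StochasticMatrix

open Matrix

lemma exists_pos_forall_le_of_pos {n 𝕜 : Type*} [Finite n] [Semiring 𝕜] [LinearOrder 𝕜]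
    [IsStrictOrderedRing 𝕜] (A : Matrix n n 𝕜) :
    ∃ c, 0 < c ∧ ∀ i j, 0 < A i j → c ≤ A i j := by
  rcases isEmpty_or_nonempty n with _ | _
  · exact ⟨1, one_pos, fun i => isEmptyElim i⟩
  obtain ⟨⟨i₀, j₀⟩, hmin⟩ :=
    Finite.exists_min fun x : n × n => if 0 < A x.1 x.2 then A x.1 x.2 else 1
  refine ⟨_, ?_, fun i j hij => (hmin (i, j)).trans_eq (if_pos hij)⟩
  dsimp only
  split_ifs with h
  exacts [h, one_pos]

lemma sum_range_pow_succ_mulVec_coboundary {n R : Type*} [Fintype n] [DecidableEq n] [Ring R]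
    (P : Matrix n n R) (b : n → R) (i : n) (J : ℕ) :
    ∑ m ∈ Finset.range J, ((P ^ (m + 1)) *ᵥ (P *ᵥ b - b)) i
      = ((P ^ (J + 1)) *ᵥ b) i - (P *ᵥ b) i := by
  have h := Finset.sum_range_sub (fun m => ((P ^ (m + 1)) *ᵥ b) i) J
  rw [zero_add, pow_one] at h
  rw [← h]
  refine Finset.sum_congr rfl fun m _ => ?_
  rw [mulVec_sub, mulVec_mulVec, ← pow_succ, Pi.sub_apply]

variable {n 𝕜 : Type*} [Fintype n] [Ring 𝕜] [LinearOrder 𝕜] [IsStrictOrderedRing 𝕜]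

lemma mul_apply_pos_iff {A B : Matrix n n 𝕜} (hA : ∀ i j, 0 ≤ A i j) (hB : ∀ i j, 0 ≤ B i j)
    (i j : n) : 0 < (A * B) i j ↔ ∃ l, 0 < A i l ∧ 0 < B l j := by
  rw [Matrix.mul_apply,
    Finset.sum_pos_iff_of_nonneg fun l _ => mul_nonneg (hA i l) (hB l j)]
  simp only [Finset.mem_univ, true_and]
  refine exists_congr fun l => ⟨fun h => ?_, fun h => mul_pos h.1 h.2⟩
  exact ⟨pos_of_mul_pos_left h (hB l j), pos_of_mul_pos_right h (hA i l)⟩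

lemma abs_mulVec_le {A : Matrix n n 𝕜} {s : 𝕜} (hA : ∀ i j, 0 ≤ A i j)
    (hs : ∀ i, ∑ j, A i j = s) {y : n → 𝕜} {M : 𝕜} (hy : ∀ i, |y i| ≤ M) (i : n) :
    |(A *ᵥ y) i| ≤ s * M :=
  calc |∑ j, A i j * y j| ≤ ∑ j, |A i j * y j| := Finset.abs_sum_le_sum_abs _ _
    _ ≤ ∑ j, A i j * M := by
      refine Finset.sum_le_sum fun j _ => ?_
      rw [abs_mul, abs_of_nonneg (hA i j)]
      exact mul_le_mul_of_nonneg_left (hy j) (hA i j)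
    _ = s * M := by rw [← Finset.sum_mul, hs]

variable [DecidableEq n] {P : Matrix n n 𝕜}

/-- `P` dominates a fixed multiple `c` of each of its positive powers, entrywise. For `c > 0` this
is a form of aperiodicity: it makes `P ^ m` contract the coboundaries `P *ᵥ b - b` to zero. -/
def DominatesPowers (P : Matrix n n 𝕜) (c : 𝕜) : Prop :=
  ∀ m, 0 < m → ∀ i j, c * (P ^ m) i j ≤ P i j

lemma exists_pow_dominatesPowers (hP : P ∈ rowStochastic 𝕜 n) :
    ∃ p, 0 < p ∧ ∃ c, 0 < c ∧ DominatesPowers (P ^ p) c := by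
  have nonneg (a : ℕ) (i j : n) : 0 ≤ (P ^ a) i j := nonneg_of_mem_rowStochastic (pow_mem hP a)
  let support (a : ℕ) : Set (n × n) := {x | 0 < (P ^ a) x.1 x.2}
  have support_succ (a b : ℕ) (hab : support a = support b) :
      support (a + 1) = support (b + 1) := by
    ext ⟨i, j⟩
    have hiff (l : n) : 0 < (P ^ a) i l ↔ 0 < (P ^ b) i l := Set.ext_iff.1 hab (i, l)
    simp only [support, Set.mem_ofPred_eq, pow_succ, mul_apply_pos_iff (nonneg _) hP.1, hiff]
  obtain ⟨p, hp, hper⟩ := exists_pos_forall_mul_eq_of_succ support_succ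
  obtain ⟨c, hc, hmin⟩ := exists_pos_forall_le_of_pos (P ^ p)
  refine ⟨p, hp, c, hc, fun m hm i j => ?_⟩
  rw [← pow_mul]
  rcases (nonneg (p * m) i j).eq_or_lt with hzero | hpos
  · simpa [← hzero] using nonneg p i j
  · have hpos' : (i, j) ∈ support p := hper m hm ▸ hpos
    calc c * (P ^ (p * m)) i j ≤ c :=
          mul_le_of_le_one_right hc.le (le_one_of_mem_rowStochastic (pow_mem hP _))
      _ ≤ (P ^ p) i j := hmin i j hpos'

variable {c : 𝕜}

lemma abs_mulVec_sub_le (hP : P ∈ rowStochastic 𝕜 n) (hPc : DominatesPowers P c) {y : n → 𝕜}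
    {M : 𝕜} (hy : ∀ i, |y i| ≤ M) {m : ℕ} (hm : 0 < m) (i : n) :
    |(P *ᵥ y) i - c * ((P ^ m) *ᵥ y) i| ≤ (1 - c) * M := by
  have h := abs_mulVec_le (A := P - c • P ^ m) (s := 1 - c)
    (fun i j => sub_nonneg.2 (hPc m hm i j)) (fun i => ?_) hy i
  · simpa [sub_mulVec, smul_mulVec] using h
  · simp [← Finset.mul_sum, sum_row_of_mem_rowStochastic hP,
      sum_row_of_mem_rowStochastic (pow_mem hP m)]

lemma natCast_mul_abs_mulVec_coboundary_le (hP : P ∈ rowStochastic 𝕜 n) (hc : 0 < c)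
    (hPc : DominatesPowers P c) {b : n → 𝕜} {B M : 𝕜} (hB : ∀ i, |b i| ≤ B)
    (hM : ∀ i, |(P *ᵥ b - b) i| ≤ M) (i : n) (J : ℕ) :
    J * |(P *ᵥ (P *ᵥ b - b)) i| ≤ J * ((1 - c) * M) + c * (B + B) := by
  set y := P *ᵥ b - b with hy
  have orbit_le (m : ℕ) : |((P ^ m) *ᵥ b) i| ≤ B := by
    simpa using abs_mulVec_le (pow_mem hP m).1 (sum_row_of_mem_rowStochastic (pow_mem hP m)) hB i
  have hsplit : J * (P *ᵥ y) i
      = ∑ m ∈ Finset.range J, ((P *ᵥ y) i - c * ((P ^ (m + 1)) *ᵥ y) i)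
        + c * (((P ^ (J + 1)) *ᵥ b) i - (P *ᵥ b) i) := by
    rw [Finset.sum_sub_distrib, ← Finset.mul_sum, hy, sum_range_pow_succ_mulVec_coboundary,
      Finset.sum_const, Finset.card_range, nsmul_eq_mul, sub_add_cancel]
  have hsum : |∑ m ∈ Finset.range J, ((P *ᵥ y) i - c * ((P ^ (m + 1)) *ᵥ y) i)|
      ≤ J * ((1 - c) * M) := by
    refine (Finset.abs_sum_le_sum_abs _ _).trans ((Finset.sum_le_card_nsmul _ _ _
      fun m _ => abs_mulVec_sub_le hP hPc hM m.succ_pos i).trans_eq ?_)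
    rw [Finset.card_range, nsmul_eq_mul]
  have hboundary : |c * (((P ^ (J + 1)) *ᵥ b) i - (P *ᵥ b) i)| ≤ c * (B + B) := by
    rw [abs_mul, abs_of_pos hc]
    gcongr
    exact (abs_sub _ _).trans (add_le_add (orbit_le _) (by simpa using orbit_le 1))
  calc J * |(P *ᵥ y) i| = |J * (P *ᵥ y) i| := by rw [abs_mul, Nat.abs_cast]
    _ ≤ _ := by rw [hsplit]; exact (abs_add_le _ _).trans (add_le_add hsum hboundary)

variable [Archimedean 𝕜]

-- Average `abs_mulVec_sub_le` over `0 < m ≤ J`: the `P ^ m` terms telescope to `O(1 / J)`.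
lemma abs_mulVec_coboundary_le (hP : P ∈ rowStochastic 𝕜 n) (hc : 0 < c)
    (hPc : DominatesPowers P c) (b : n → 𝕜) {M : 𝕜} (hM : ∀ i, |(P *ᵥ b - b) i| ≤ M) (i : n) :
    |(P *ᵥ (P *ᵥ b - b)) i| ≤ (1 - c) * M := by
  obtain ⟨B, hB⟩ := exists_forall_abs_le b
  by_contra! hlt
  obtain ⟨J, hJ⟩ := exists_lt_nsmul (sub_pos.2 hlt) (c * (B + B))
  rw [nsmul_eq_mul, mul_sub] at hJ
  exact (sub_le_iff_le_add'.2
    (natCast_mul_abs_mulVec_coboundary_le hP hc hPc hB hM i J)).not_gt hJ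

lemma abs_pow_mulVec_coboundary_le (hP : P ∈ rowStochastic 𝕜 n) (hc : 0 < c)
    (hPc : DominatesPowers P c) (b : n → 𝕜) {M : 𝕜}
    (hM : ∀ i, |(P *ᵥ b - b) i| ≤ M) (m : ℕ) (i : n) :
    |((P ^ m) *ᵥ (P *ᵥ b - b)) i| ≤ (1 - c) ^ m * M := by
  have hcomm (m : ℕ) : (P ^ m) *ᵥ (P *ᵥ b - b) = P *ᵥ ((P ^ m) *ᵥ b) - (P ^ m) *ᵥ b := by
    rw [mulVec_sub, mulVec_mulVec, mulVec_mulVec, ← pow_succ, ← pow_succ']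
  induction m generalizing i with
  | zero => simpa using hM i
  | succ m ih =>
    rw [pow_succ' P, ← mulVec_mulVec, hcomm, pow_succ', mul_assoc]
    exact abs_mulVec_coboundary_le hP hc hPc _ (fun j => hcomm m ▸ ih j) i

end StochasticMatrix

section Splitting

open Matrix

variable {n 𝕜 : Type*} [Fintype n] [DecidableEq n] [Field 𝕜] [LinearOrder 𝕜]
  [IsStrictOrderedRing 𝕜] [Archimedean 𝕜] {P : Matrix n n 𝕜} {c : 𝕜}

lemma exists_pow_mulVec_coboundary_small (hP : P ∈ rowStochastic 𝕜 n) (hc : 0 < c)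
    (hPc : DominatesPowers P c) (b : n → 𝕜) {ε : 𝕜} (hε : 0 < ε) :
    ∃ m, ∀ i, |((P ^ m) *ᵥ (P *ᵥ b - b)) i| < ε := by
  obtain ⟨M, hM⟩ := exists_forall_abs_le (P *ᵥ b - b)
  have hM1 : 0 < |M| + 1 := by positivity
  obtain ⟨m, hm⟩ := exists_pow_lt_of_lt_one (div_pos hε hM1) (sub_lt_self 1 hc)
  refine ⟨m, fun i => ?_⟩
  calc _ ≤ (1 - c) ^ m * (|M| + 1) := abs_pow_mulVec_coboundary_le hP hc hPc b
        (fun j => (hM j).trans ((le_abs_self M).trans (lt_add_one _).le)) m i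
    _ < ε := (lt_div_iff₀ hM1).1 hm

lemma coboundary_eq_zero_of_fixed (hP : P ∈ rowStochastic 𝕜 n) (hc : 0 < c)
    (hPc : DominatesPowers P c) {b : n → 𝕜}
    (hfix : P *ᵥ (P *ᵥ b - b) = P *ᵥ b - b) : P *ᵥ b - b = 0 := by
  have hpow (m : ℕ) : (P ^ m) *ᵥ (P *ᵥ b - b) = P *ᵥ b - b := by
    induction m with
    | zero => simp
    | succ m ih => rw [pow_succ, ← mulVec_mulVec, hfix, ih]
  ext i
  by_contra hne
  obtain ⟨m, hm⟩ := exists_pow_mulVec_coboundary_small hP hc hPc b (abs_pos.2 hne)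
  exact (hm i).ne (by rw [hpow])

lemma exists_fixed_add_coboundary (hP : P ∈ rowStochastic 𝕜 n) (hc : 0 < c)
    (hPc : DominatesPowers P c) (v : n → 𝕜) :
    ∃ a b, P *ᵥ a = a ∧ v = a + (P *ᵥ b - b) := by
  let f : (n → 𝕜) →ₗ[𝕜] n → 𝕜 := P.mulVecLin - LinearMap.id
  have hdisj : Disjoint (LinearMap.ker f) (LinearMap.range f) := by
    rw [Submodule.disjoint_def]
    rintro _ hker ⟨b, rfl⟩
    exact coboundary_eq_zero_of_fixed hP hc hPc (sub_eq_zero.1 hker)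
  have htop : LinearMap.ker f ⊔ LinearMap.range f = ⊤ :=
    Submodule.eq_top_of_disjoint _ _ (by rw [add_comm, f.finrank_range_add_finrank_ker]) hdisj
  obtain ⟨a, ha, _, ⟨b, rfl⟩, hab⟩ := Submodule.mem_sup.1 (htop ▸ Submodule.mem_top (x := v))
  exact ⟨a, b, sub_eq_zero.1 ha, hab.symm⟩

end Splitting

section Liminf

lemma liminf_add_of_tendsto {ι : Type*} {f : Filter ι} [f.NeBot] {u w : ι → ℝ} {a : ℝ}
    (hu : f.IsBoundedUnder (· ≤ ·) fun i => |u i|) (hw : Tendsto w f (𝓝 a)) :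
    liminf (u + w) f = liminf u f + a := by
  obtain ⟨hu_le, hu_ge⟩ := isBoundedUnder_le_abs.1 hu
  apply le_antisymm
  · have h := liminf_add_le (u := w) (v := u) hw.isBoundedUnder_ge hw.isBoundedUnder_le hu_ge
      hu_le.isCoboundedUnder_ge
    rwa [hw.limsup_eq, add_comm, add_comm a] at h
  · have h := le_liminf_add (u := u) (v := w) hu_ge hu_le hw.isBoundedUnder_ge
      hw.isBoundedUnder_le.isCoboundedUnder_ge
    rwa [hw.liminf_eq] at h

lemma isBoundedUnder_abs_add {ι : Type*} {f : Filter ι} {u w : ι → ℝ} {a : ℝ}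
    (hu : f.IsBoundedUnder (· ≤ ·) fun i => |u i|) (hw : Tendsto w f (𝓝 a)) :
    f.IsBoundedUnder (· ≤ ·) fun i => |(u + w) i| :=
  (isBoundedUnder_le_add hu hw.abs.isBoundedUnder_le).mono_le
    (Eventually.of_forall fun _ => abs_add_le _ _)

lemma tendsto_div_natCast_of_dilations {Y : ℕ → ℝ} {M : ℝ}
    (hM : ∀ N j, |Y (N + j) - Y N| ≤ M * j)
    (hY : ∀ ε > 0, ∃ q > 0, ∀ N, |Y (q * N)| ≤ ε * (q * N : ℕ)) :
    Tendsto (fun N : ℕ => Y N / N) atTop (𝓝 0) := by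
  rw [Metric.tendsto_atTop']
  intro ε hε
  obtain ⟨q, hq, hYq⟩ := hY (ε / 2) (half_pos hε)
  obtain ⟨N₀, hN₀⟩ := exists_nat_gt (M * q / (ε / 2))
  have hM0 : 0 ≤ M := by simpa using (abs_nonneg _).trans (hM 0 1)
  refine ⟨N₀, fun N hN => ?_⟩
  have hNpos : (0 : ℝ) < N := by exact_mod_cast N₀.zero_le.trans_lt hN
  have hlarge : M * q < ε / 2 * N := by
    rw [div_lt_iff₀ (half_pos hε)] at hN₀
    have : (N₀ : ℝ) < N := by exact_mod_cast hN
    nlinarith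
  have hfloor : ((q * (N / q) : ℕ) : ℝ) ≤ N := by exact_mod_cast Nat.mul_div_le N q
  have hmod : ((N % q : ℕ) : ℝ) ≤ q := by exact_mod_cast (Nat.mod_lt N hq).le
  have hdiff := hM (q * (N / q)) (N % q)
  rw [Nat.div_add_mod] at hdiff
  rw [Real.dist_eq, sub_zero, abs_div, Nat.abs_cast, div_lt_iff₀ hNpos]
  calc |Y N| ≤ |Y N - Y (q * (N / q))| + |Y (q * (N / q))| := by
        simpa using abs_add_le (Y N - Y (q * (N / q))) (Y (q * (N / q)))
    _ ≤ M * q + ε / 2 * N := by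
      gcongr ?_ + ?_
      · exact hdiff.trans (by gcongr)
      · exact (hYq _).trans (by gcongr)
    _ < ε * N := by linarith

end Liminf

lemma exists_bellman_solution {Q A : Type*} [Finite Q] [Finite A] [Nonempty A] {K : ℝ}
    (hK : 1 < K) (g : Q → A → ℝ) (δ : Q → A → Q) :
    ∃ W : Q → ℝ, (∀ q a, K * W q ≤ g q a + W (δ q a)) ∧
      ∀ q, ∃ a, K * W q = g q a + W (δ q a) := by
  have := Fintype.ofFinite Q
  have hK0 : 0 < K := one_pos.trans hK
  let T (W : Q → ℝ) (q : Q) : ℝ := (⨅ a, g q a + W (δ q a)) / K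
  have T_le (W W' : Q → ℝ) (q : Q) : T W q - T W' q ≤ K⁻¹ * dist W W' := by
    obtain ⟨a, ha⟩ := exists_eq_ciInf_of_finite (f := fun a => g q a + W' (δ q a))
    have hinf : ⨅ a, g q a + W (δ q a) ≤ g q a + W (δ q a) := ciInf_le (Finite.bddBelow_range _) a
    have hdist : W (δ q a) - W' (δ q a) ≤ dist W W' :=
      (le_abs_self _).trans (dist_le_pi_dist W W' (δ q a))
    rw [← sub_div, div_eq_inv_mul, ← ha]
    gcongr
    linarith
  have T_contracting : ContractingWith K⁻¹.toNNReal T := by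
    refine ⟨Real.toNNReal_lt_one.2 (inv_lt_one_of_one_lt₀ hK),
      LipschitzWith.of_dist_le_mul fun W W' => ?_⟩
    rw [Real.coe_toNNReal _ (by positivity), dist_pi_le_iff (by positivity)]
    exact fun q => abs_sub_le_iff.2 ⟨T_le W W' q, dist_comm W W' ▸ T_le W' W q⟩
  obtain ⟨W, hW⟩ : ∃ W, T W = W := ⟨_, T_contracting.fixedPoint_isFixedPt⟩
  have hfix (q : Q) : K * W q = ⨅ a, g q a + W (δ q a) := by
    rw [mul_comm, ← eq_div_iff hK0.ne']
    exact (congrFun hW q).symm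
  refine ⟨W, fun q a => (hfix q).trans_le (ciInf_le (Finite.bddBelow_range _) a), fun q => ?_⟩
  obtain ⟨a, ha⟩ := exists_eq_ciInf_of_finite (f := fun a => g q a + W (δ q a))
  exact ⟨a, (hfix q).trans ha.symm⟩

section Potential

variable {K : ℕ} {Φ : ℕ → ℝ}

-- Linear bounds in `N + 1`, not `N`, propagate along digits since `K N + d + 1 ≤ K (N + 1)`.
lemma frequently_le_neg_mul_succ (hK : 2 ≤ K) (hopt : ∀ N, ∃ d < K, Φ (K * N + d) = K * Φ N)
    {η : ℝ} (hη : 0 ≤ η) {N₀ : ℕ} (hN₀ : 0 < N₀) (hΦ : Φ N₀ ≤ -η * (N₀ + 1)) :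
    ∃ᶠ N in atTop, Φ N ≤ -η * (N + 1) := by
  suffices h : ∀ m, ∃ N > m, Φ N ≤ -η * (N + 1) from frequently_atTop'.2 h
  intro m
  induction m with
  | zero => exact ⟨N₀, hN₀, hΦ⟩
  | succ m ih =>
    obtain ⟨N, hmN, hN⟩ := ih
    obtain ⟨d, hd, hΦd⟩ := hopt N
    have hd' : (d : ℝ) + 1 ≤ K := by exact_mod_cast hd
    refine ⟨K * N + d, by nlinarith, ?_⟩
    calc Φ (K * N + d) = K * Φ N := hΦd
      _ ≤ K * (-η * (N + 1)) := by gcongr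
      _ = -η * (K * N + K) := by ring
      _ ≤ -η * ((K * N + d : ℕ) + 1) := by push_cast; nlinarith

lemma nonneg_of_liminf_div_nonneg (hK : 2 ≤ K) (hopt : ∀ N, ∃ d < K, Φ (K * N + d) = K * Φ N)
    (hbdd : atTop.IsBoundedUnder (· ≥ ·) fun N : ℕ => Φ N / N)
    (hlim : 0 ≤ atTop.liminf (fun N : ℕ => Φ N / N)) {N : ℕ} (hN : 0 < N) : 0 ≤ Φ N := by
  by_contra! hneg
  set η := -Φ N / (N + 1) with hη
  have hη0 : 0 < η := div_pos (neg_pos.2 hneg) (by positivity)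
  have hfreq := frequently_le_neg_mul_succ hK hopt hη0.le hN (by rw [hη]; field_simp; rfl)
  have hev := eventually_lt_of_lt_liminf ((neg_lt_zero.2 hη0).trans_le hlim) hbdd
  obtain ⟨N', hle, hlt, hpos⟩ := (hfreq.and_eventually (hev.and (eventually_gt_atTop 0))).exists
  rw [lt_div_iff₀ (by exact_mod_cast hpos)] at hlt
  linarith

lemma div_mul_succ_le (hK : 2 ≤ K) (hsup : ∀ N, ∀ d < K, K * Φ N ≤ Φ (K * N + d))
    {ε : ℝ} (hε : 0 ≤ ε) (hinit : ∀ N, 0 < N → N < K → ε ≤ Φ N) {N : ℕ} (hN : 0 < N) :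
    ε / K * (N + 1) ≤ Φ N := by
  have hK0 : (0 : ℝ) < K := by positivity
  induction N using Nat.strong_induction_on with
  | h N ih =>
  rcases lt_or_ge N K with hNK | hNK
  · have hNK' : (N : ℝ) + 1 ≤ K := by exact_mod_cast hNK
    calc ε / K * (N + 1) ≤ ε / K * K := by gcongr
      _ = ε := div_mul_cancel₀ ε hK0.ne'
      _ ≤ Φ N := hinit N hN hNK
  · have hsucc : (N : ℝ) + 1 ≤ K * ((N / K : ℕ) + 1) := by
      exact_mod_cast Nat.lt_mul_div_succ N (by lia : 0 < K)
    calc ε / K * (N + 1) ≤ ε / K * (K * ((N / K : ℕ) + 1)) := by gcongr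
      _ = K * (ε / K * ((N / K : ℕ) + 1)) := by ring
      _ ≤ K * Φ (N / K) := by
        gcongr
        exact ih _ (Nat.div_lt_self hN hK) (Nat.div_pos hNK (by lia))
      _ ≤ Φ (K * (N / K) + N % K) := hsup _ _ (Nat.mod_lt _ (by lia))
      _ = Φ N := by rw [Nat.div_add_mod]

lemma exists_nonpos_of_liminf_div_nonpos (hK : 2 ≤ K)
    (hsup : ∀ N, ∀ d < K, K * Φ N ≤ Φ (K * N + d))
    (hbdd : atTop.IsBoundedUnder (· ≤ ·) fun N : ℕ => Φ N / N)
    (hlim : atTop.liminf (fun N : ℕ => Φ N / N) ≤ 0) : ∃ N, 0 < N ∧ Φ N ≤ 0 := by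
  by_contra! hpos
  obtain ⟨N₀, hN₀, hmin⟩ :=
    Finset.exists_min_image (Finset.Ico 1 K) Φ ⟨1, Finset.mem_Ico.2 ⟨le_rfl, hK⟩⟩
  have hε : 0 < Φ N₀ := hpos _ (Finset.mem_Ico.1 hN₀).1
  have hslope : 0 < Φ N₀ / K := by positivity
  have hge : ∀ᶠ N : ℕ in atTop, Φ N₀ / K ≤ Φ N / N := by
    filter_upwards [eventually_gt_atTop 0] with N hN
    rw [le_div_iff₀ (by positivity)]
    linarith [div_mul_succ_le hK hsup hε.le
      (fun M hM hMK => hmin M (Finset.mem_Ico.2 ⟨hM, hMK⟩)) hN]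
  exact (hslope.trans_le (le_liminf_of_le hbdd.isCoboundedUnder_ge hge)).not_ge hlim

lemma frequently_eq_zero_of_liminf_div_eq_zero (hK : 2 ≤ K)
    (hsup : ∀ N, ∀ d < K, K * Φ N ≤ Φ (K * N + d))
    (hopt : ∀ N, ∃ d < K, Φ (K * N + d) = K * Φ N)
    (hbdd : atTop.IsBoundedUnder (· ≤ ·) fun N : ℕ => |Φ N / N|)
    (hlim : atTop.liminf (fun N : ℕ => Φ N / N) = 0) : ∃ᶠ N in atTop, Φ N = 0 := by
  obtain ⟨hbdd_le, hbdd_ge⟩ := isBoundedUnder_le_abs.1 hbdd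
  obtain ⟨N₀, hN₀, hle⟩ := exists_nonpos_of_liminf_div_nonpos hK hsup hbdd_le hlim.le
  have hfreq := frequently_le_neg_mul_succ hK hopt le_rfl hN₀ (by simpa using hle)
  refine (hfreq.and_eventually (eventually_gt_atTop 0)).mono fun N ⟨hNle, hN⟩ => ?_
  exact le_antisymm (by simpa using hNle) (nonneg_of_liminf_div_nonneg hK hopt hbdd_ge hlim.ge hN)

end Potential

/-- `r` is the sequence of states visited by the transition function `δ` on base-`k` expansions:
appending the digit `d` to `N` moves the state `r N` to `δ (r N) d`. As `0 = k * 0 + 0`, the state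
`r 0` must be fixed by the digit `0`, so leading zeros are harmless. -/
def IsStateSeq {Q : Type*} (k : ℕ) (δ : Q → ℕ → Q) (r : ℕ → Q) : Prop :=
  ∀ N, ∀ d < k, r (k * N + d) = δ (r N) d

/-- The Markov matrix on the states of `δ` that reads a uniformly random digit `d < k`. -/
def transitionMatrix {Q : Type*} [DecidableEq Q] (k : ℕ) (δ : Q → ℕ → Q) : Matrix Q Q ℚ :=
  Matrix.of fun i j => (∑ d ∈ Finset.range k, if δ i d = j then 1 else 0) / k

section TransitionMatrix

variable {Q : Type*} [Fintype Q] [DecidableEq Q] {k : ℕ}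

lemma transitionMatrix_mulVec (k : ℕ) (δ : Q → ℕ → Q) (f : Q → ℚ) (i : Q) :
    (transitionMatrix k δ *ᵥ f) i = (∑ d ∈ Finset.range k, f (δ i d)) / k := by
  simp only [Matrix.mulVec, dotProduct, transitionMatrix, Matrix.of_apply, div_mul_eq_mul_div,
    ← Finset.sum_div, Finset.sum_mul]
  rw [Finset.sum_comm]
  simp

lemma transitionMatrix_mem_rowStochastic (hk : k ≠ 0) (δ : Q → ℕ → Q) :
    transitionMatrix k δ ∈ Matrix.rowStochastic ℚ Q := by
  refine ⟨fun i j => div_nonneg (Finset.sum_nonneg fun d _ => ?_) k.cast_nonneg, ?_⟩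
  · split_ifs <;> norm_num
  · ext i
    simp [transitionMatrix_mulVec, hk]

end TransitionMatrix

namespace IsStateSeq

variable {Q : Type*} {k : ℕ} {δ : Q → ℕ → Q} {r : ℕ → Q}

lemma exists_pow (hr : IsStateSeq k δ r) (hk : 0 < k) (p : ℕ) :
    ∃ δ' : Q → ℕ → Q, IsStateSeq (k ^ p) δ' r := by
  induction p with
  | zero => exact ⟨fun q _ => q, fun N d hd => by simp_all⟩
  | succ p ih =>
    obtain ⟨δ', hr'⟩ := ih
    refine ⟨fun q D => δ (δ' q (D / k)) (D % k), fun N D hD => ?_⟩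
    beta_reduce
    rw [← hr' N _ (Nat.div_lt_of_lt_mul (pow_succ' k p ▸ hD)), ← hr _ _ (Nat.mod_lt D hk)]
    congr 1
    rw [mul_add, add_assoc, Nat.div_add_mod, pow_succ', mul_assoc]

section Potential

variable [Finite Q] {G : ℕ → ℝ} {g : Q → ℕ → ℝ}

lemma exists_potential (hk : 2 ≤ k) (hr : IsStateSeq k δ r)
    (hG : ∀ N, ∀ d < k, G (k * N + d) = k * G N + g (r N) d) :
    ∃ W : Q → ℝ, (∀ N, ∀ d < k, k * (G N + W (r N)) ≤ G (k * N + d) + W (r (k * N + d))) ∧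
      ∀ N, ∃ d < k, G (k * N + d) + W (r (k * N + d)) = k * (G N + W (r N)) := by
  have : Nonempty (Fin k) := ⟨⟨0, by lia⟩⟩
  obtain ⟨W, hWle, hWeq⟩ := exists_bellman_solution (K := k) (by exact_mod_cast hk)
    (fun q (d : Fin k) => g q d) (fun q d => δ q d)
  refine ⟨W, fun N d hd => ?_, fun N => ?_⟩
  · rw [hG N d hd, hr N d hd]
    linarith [hWle (r N) ⟨d, hd⟩]
  · obtain ⟨d, hd⟩ := hWeq (r N)
    refine ⟨d, d.2, ?_⟩
    rw [hG N d d.2, hr N d d.2]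
    linarith

lemma exists_frequently_add_eq_zero (hk : 2 ≤ k) (hr : IsStateSeq k δ r)
    (hG : ∀ N, ∀ d < k, G (k * N + d) = k * G N + g (r N) d)
    (hbdd : atTop.IsBoundedUnder (· ≤ ·) fun N : ℕ => |G N / N|)
    (hlim : atTop.liminf (fun N : ℕ => G N / N) = 0) :
    ∃ W : Q → ℝ, ∃ᶠ N in atTop, G N + W (r N) = 0 := by
  obtain ⟨W, hsup, hopt⟩ := hr.exists_potential hk hG
  obtain ⟨B, hB⟩ := exists_forall_abs_le W
  have hW : Tendsto (fun N : ℕ => W (r N) / N) atTop (𝓝 0) :=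
    tendsto_bdd_div_atTop_nhds_zero (.of_forall fun N => (abs_le.1 (hB (r N))).1)
      (.of_forall fun N => (abs_le.1 (hB (r N))).2) tendsto_natCast_atTop_atTop
  have hdiv : (fun N : ℕ => (G N + W (r N)) / N)
      = (fun N : ℕ => G N / N) + fun N : ℕ => W (r N) / N := funext fun N => add_div _ _ _
  refine ⟨W, frequently_eq_zero_of_liminf_div_eq_zero hk hsup hopt ?_ ?_⟩
  · simpa only [← hdiv] using isBoundedUnder_abs_add hbdd hW
  · rw [hdiv, liminf_add_of_tendsto hbdd hW, hlim, add_zero]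

theorem exists_rat_eq_liminf_div (hk : 2 ≤ k) (hr : IsStateSeq k δ r) {C : ℕ → ℚ}
    {γ : Q → ℕ → ℚ} (hC : ∀ N, ∀ d < k, C (k * N + d) = k * C N + γ (r N) d)
    (hbdd : atTop.IsBoundedUnder (· ≤ ·) fun N : ℕ => |(C N : ℝ) / N|) :
    ∃ q : ℚ, atTop.liminf (fun N : ℕ => (C N : ℝ) / N) = q := by
  set α := atTop.liminf fun N : ℕ => (C N : ℝ) / N
  have hα : Tendsto (fun N : ℕ => -(α * N) / N) atTop (𝓝 (-α)) :=
    tendsto_const_nhds.congr' <| (eventually_ne_atTop 0).mono fun N hN => by field_simp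
  have hdiv : (fun N : ℕ => (C N + -(α * N)) / N)
      = (fun N : ℕ => (C N : ℝ) / N) + fun N : ℕ => -(α * N) / N :=
    funext fun N => add_div _ _ _
  obtain ⟨W, hW⟩ := hr.exists_frequently_add_eq_zero hk
    (G := fun N => C N + -(α * N)) (g := fun q d => γ q d - α * d)
    (fun N d hd => by rw [hC N d hd]; push_cast; ring)
    (by simpa only [← hdiv] using isBoundedUnder_abs_add hbdd hα)
    (by rw [hdiv, liminf_add_of_tendsto hbdd hα]; exact add_neg_cancel α)
  obtain ⟨N, hN, N', hN', hne, hrN⟩ := (Nat.frequently_atTop_iff_infinite.1 hW)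
    |>.exists_ne_map_eq_of_mapsTo (Set.mapsTo_univ r _) Set.finite_univ
  have hslope : (C N' : ℝ) - C N = α * (N' - N) := by
    rw [Set.mem_ofPred_eq] at hN hN'
    rw [hrN] at hN
    linarith
  refine ⟨(C N' - C N) / (N' - N), ?_⟩
  push_cast
  rw [eq_div_iff (sub_ne_zero.2 (by exact_mod_cast hne.symm)), hslope]

end Potential

section PartialSums

lemma sum_range_mul_add {R : Type*} [AddCommMonoid R] (hr : IsStateSeq k δ r) (f : Q → R)
    (N : ℕ) {d : ℕ} (hd : d ≤ k) :
    ∑ w ∈ Finset.range (k * N + d), f (r w)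
      = ∑ w ∈ Finset.range (k * N), f (r w) + ∑ e ∈ Finset.range d, f (δ (r N) e) := by
  rw [Finset.sum_range_add]
  congr 1
  exact Finset.sum_congr rfl fun e he => by rw [hr N e ((Finset.mem_range.1 he).trans_le hd)]

lemma sum_range_mul [Fintype Q] [DecidableEq Q] (hr : IsStateSeq k δ r) (f : Q → ℚ) (N : ℕ) :
    ∑ w ∈ Finset.range (k * N), f (r w)
      = k * ∑ w ∈ Finset.range N, (transitionMatrix k δ *ᵥ f) (r w) := by
  rcases eq_or_ne k 0 with rfl | hk
  · simp
  induction N with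
  | zero => simp
  | succ N ih =>
    rw [mul_add_one, hr.sum_range_mul_add f N le_rfl, ih, Finset.sum_range_succ, mul_add,
      transitionMatrix_mulVec, mul_div_cancel₀ _ (Nat.cast_ne_zero.2 hk)]

lemma sum_range_pow_mul [Fintype Q] [DecidableEq Q] (hr : IsStateSeq k δ r) (f : Q → ℚ)
    (p N : ℕ) : ∑ w ∈ Finset.range (k ^ p * N), f (r w)
      = k ^ p * ∑ w ∈ Finset.range N, (transitionMatrix k δ ^ p *ᵥ f) (r w) := by
  induction p generalizing f with
  | zero => simp
  | succ p ih =>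
    rw [pow_succ' k, mul_assoc, hr.sum_range_mul, ih, Matrix.mulVec_mulVec, ← pow_succ,
      pow_succ' (k : ℚ), mul_assoc]

end PartialSums

end IsStateSeq

lemma abs_sum_range_add_sub_le {u : ℕ → ℚ} {M : ℚ} (hM : ∀ n, |u n| ≤ M) (N j : ℕ) :
    |∑ n ∈ Finset.range (N + j), u n - ∑ n ∈ Finset.range N, u n| ≤ M * j := by
  rw [Finset.sum_range_add, add_sub_cancel_left, mul_comm]
  exact (Finset.abs_sum_le_sum_abs _ _).trans
    ((Finset.sum_le_card_nsmul _ _ M fun w _ => hM _).trans_eq (by simp))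

lemma isBoundedUnder_abs_sum_range_div {Q : Type*} [Finite Q] (r : ℕ → Q) (f : Q → ℚ) :
    atTop.IsBoundedUnder (· ≤ ·)
      fun N : ℕ => |((∑ w ∈ Finset.range N, f (r w) : ℚ) : ℝ) / N| := by
  obtain ⟨M, hM⟩ := exists_forall_abs_le f
  refine isBoundedUnder_of_eventually_le (a := (M : ℝ)) ?_
  filter_upwards [eventually_gt_atTop 0] with N hN
  rw [abs_div, Nat.abs_cast, div_le_iff₀ (by exact_mod_cast hN)]
  have := abs_sum_range_add_sub_le (fun n => hM (r n)) 0 N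
  rw [zero_add, Finset.sum_range_zero, sub_zero] at this
  exact_mod_cast this

namespace IsStateSeq

variable {Q : Type*} [Fintype Q] [DecidableEq Q] {k : ℕ} {δ : Q → ℕ → Q} {r : ℕ → Q}

lemma tendsto_sum_range_coboundary_div (hk : 0 < k) (hr : IsStateSeq k δ r) {p : ℕ} {c : ℚ}
    (hc : 0 < c) (hdom : DominatesPowers (transitionMatrix k δ ^ p) c) (b : Q → ℚ) :
    Tendsto (fun N : ℕ => ((∑ w ∈ Finset.range N,
      (transitionMatrix k δ ^ p *ᵥ b - b) (r w) : ℚ) : ℝ) / N) atTop (𝓝 0) := by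
  set y := transitionMatrix k δ ^ p *ᵥ b - b
  obtain ⟨M, hM⟩ := exists_forall_abs_le y
  refine tendsto_div_natCast_of_dilations (M := M)
    (fun N j => by exact_mod_cast abs_sum_range_add_sub_le (fun n => hM (r n)) N j) fun ε hε => ?_
  obtain ⟨η, hη, hηε⟩ := exists_rat_btwn hε
  obtain ⟨m, hm⟩ := exists_pow_mulVec_coboundary_small
    (pow_mem (transitionMatrix_mem_rowStochastic hk.ne' δ) p) hc hdom b (Rat.cast_pos.1 hη)
  refine ⟨k ^ (p * m), by positivity, fun N => ?_⟩
  have hsum : |∑ w ∈ Finset.range N, (transitionMatrix k δ ^ (p * m) *ᵥ y) (r w)| ≤ η * N := by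
    simpa [pow_mul] using abs_sum_range_add_sub_le (fun n => (hm (r n)).le) 0 N
  have hη_le : |∑ w ∈ Finset.range (k ^ (p * m) * N), y (r w)| ≤ η * (k ^ (p * m) * N : ℕ) :=
    calc _ = k ^ (p * m) * |∑ w ∈ Finset.range N, (transitionMatrix k δ ^ (p * m) *ᵥ y) (r w)| := by
          rw [hr.sum_range_pow_mul, abs_mul, abs_pow, Nat.abs_cast]
      _ ≤ k ^ (p * m) * (η * N) := by gcongr
      _ = η * (k ^ (p * m) * N : ℕ) := by push_cast; ring
  calc _ ≤ (η : ℝ) * (k ^ (p * m) * N : ℕ) := by exact_mod_cast hη_le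
    _ ≤ ε * (k ^ (p * m) * N : ℕ) := by gcongr

lemma exists_rat_eq_liminf_of_fixed (hk : 2 ≤ k) (hr : IsStateSeq k δ r) {p : ℕ} (hp : 0 < p)
    {a : Q → ℚ} (ha : transitionMatrix k δ ^ p *ᵥ a = a) :
    ∃ q : ℚ, atTop.liminf
      (fun N : ℕ => ((∑ w ∈ Finset.range N, a (r w) : ℚ) : ℝ) / N) = q := by
  obtain ⟨δ', hr'⟩ := hr.exists_pow (by lia) p
  refine hr'.exists_rat_eq_liminf_div (hk.trans (Nat.le_pow hp))
    (γ := fun q d => ∑ e ∈ Finset.range d, a (δ' q e)) (fun N d hd => ?_)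
    (isBoundedUnder_abs_sum_range_div r a)
  rw [hr'.sum_range_mul_add a N hd.le, hr.sum_range_pow_mul, ha, Nat.cast_pow]

end IsStateSeq

theorem IsStateSeq.exists_rat_eq_liminf {Q : Type*} [Finite Q] {k : ℕ} {δ : Q → ℕ → Q}
    {r : ℕ → Q} (hk : 2 ≤ k) (hr : IsStateSeq k δ r) (v : Q → ℚ) :
    ∃ q : ℚ, atTop.liminf
      (fun N : ℕ => ((∑ w ∈ Finset.range N, v (r w) : ℚ) : ℝ) / N) = q := by
  classical
  have := Fintype.ofFinite Q
  have hP := transitionMatrix_mem_rowStochastic (k := k) (by lia) δ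
  obtain ⟨p, hp, c, hc, hdom⟩ := exists_pow_dominatesPowers hP
  obtain ⟨a, b, ha, rfl⟩ := exists_fixed_add_coboundary (pow_mem hP p) hc hdom v
  obtain ⟨q, hq⟩ := hr.exists_rat_eq_liminf_of_fixed hk hp ha
  have hlim := liminf_add_of_tendsto (isBoundedUnder_abs_sum_range_div r a)
    (hr.tendsto_sum_range_coboundary_div (by lia) hc hdom b)
  refine ⟨q, ?_⟩
  rw [← hq, ← add_zero (liminf (fun N : ℕ => ((∑ w ∈ Finset.range N, a (r w) : ℚ) : ℝ) / N) _),
    ← hlim]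
  congr 1
  ext N
  simp only [Pi.add_apply, Finset.sum_add_distrib, Rat.cast_add, add_div]

end AutomaticDensity

open AutomaticDensity

namespace IsAutomaticSeq

variable {Δ : Type*} {k : ℕ} {h : ℕ → Δ}

lemma comp {Δ' : Type*} (hh : IsAutomaticSeq k h) (f : Δ → Δ') : IsAutomaticSeq k (f ∘ h) := by
  obtain ⟨Q, _, q₀, δ, τ, hτ⟩ := hh
  exact ⟨Q, inferInstance, q₀, δ, f ∘ τ, fun n => congrArg f (hτ n)⟩

-- `δ q₀ 0` need not be `q₀`, so an extra state `none` absorbs leading zeros.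
lemma exists_isStateSeq (hk : 2 ≤ k) (hh : IsAutomaticSeq k h) :
    ∃ (Q : Type) (_ : Finite Q) (δ : Q → ℕ → Q) (r : ℕ → Q) (τ : Q → Δ),
      IsStateSeq k δ r ∧ ∀ n, h n = τ (r n) := by
  obtain ⟨Q, _, q₀, δ, τ, hτ⟩ := hh
  refine ⟨Option Q, inferInstance,
    fun o d => if o = none ∧ d = 0 then none else some (δ (o.getD q₀) d),
    fun n => if n = 0 then none else some ((Nat.digits k n).reverse.foldl δ q₀),
    fun o => τ (o.getD q₀), fun N d hd => ?_, fun n => ?_⟩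
  · by_cases hzero : N = 0 ∧ d = 0
    · simp [hzero]
    · have hne : k * N + d ≠ 0 := by
        simp only [ne_eq, add_eq_zero, mul_eq_zero]
        lia
      have hdigits := Nat.digits_add k hk d N hd (by lia)
      rw [add_comm] at hdigits
      beta_reduce
      rw [if_neg hne, hdigits]
      by_cases hN : N = 0
      · have hd0 : d ≠ 0 := fun h => hzero ⟨hN, h⟩
        simp [hN, hd0]
      · simp [hN]
  · rw [hτ n]
    by_cases hn : n = 0 <;> simp [hn]

end IsAutomaticSeq

lemma piCount_eq_sum (S : Set ℕ) (N : ℕ) :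
    piCount S N = ∑ n ∈ Finset.range N, S.indicator (fun _ => 1) n := by
  classical
  have hS : S ∩ Set.Iio N = ((Finset.range N).filter (· ∈ S) : Finset ℕ) := by
    ext n
    simp [and_comm]
  rw [piCount, hS, Set.ncard_coe_finset, Finset.card_filter]
  exact Finset.sum_congr rfl fun n _ => by rw [Set.indicator_apply]

theorem lower_density_automatic_set_rational_general
    (k : ℕ) (hk : 2 ≤ k) {h : ℕ → ℚ} (hh : IsAutomaticSeq k h) :
    ∃ q : ℚ, atTop.liminf (fun N : ℕ => (∑ n ∈ Finset.range N, (h n : ℝ)) / N) = q := by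
  obtain ⟨Q, _, δ, r, τ, hr, hτ⟩ := hh.exists_isStateSeq hk
  simpa only [hτ, Rat.cast_sum] using hr.exists_rat_eq_liminf hk τ

theorem lower_density_automatic_set_rational
    (k : ℕ) (hk : 2 ≤ k) (S : Set ℕ) (hS : IsAutomaticSet k S) :
    ∃ q : ℚ, Filter.atTop.liminf (fun N : ℕ => (piCount S N : ℝ) / N) = (q : ℝ) := by
  simpa only [Function.comp_apply, piCount_eq_sum, Nat.cast_sum, Rat.cast_natCast] using
    lower_density_automatic_set_rational_general k hk (hS.comp (Nat.cast : ℕ → ℚ))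
end

section
/- Let k ≥ 2 be a natural number, let h : ℕ → ℚ be a k-automatic sequence taking nonnegative rational values, and let s(n) = ∑_{j<n} h(j). Then there exist a real number β with 0 < β < k, a real constant C > 0, an integer a ≥ 1, and rational numbers c_0, c_1, …, c_{a−1} such that for every n ≥ 0 and every j ∈ {0, 1, …, a−1}, |s(k^{an+j}) − c_j · k^{an+j}| < C · β^{an}. -/
open Filter

/-!
Reading a uniformly random base-`k` digit turns the automaton into a Markov chain with a rational
transition matrix `P`, and `k ^ (-m) * s (k ^ m)` is the expected output after `m` steps. By the
equality case of the triangle inequality, an eigenvector of `P` for an eigenvalue `l` of modulus `1`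
is multiplied by `l` along every edge leaving a state where its modulus is maximal; following such
edges until they repeat shows that `l` is a root of unity. Hence some `P ^ a` has `1` as its only
eigenvalue of modulus `1`, and this eigenvalue is semisimple because `P` is a contraction. The
spectral projection `G` onto it is a polynomial in `P` with rational coefficients, whence the
rational limits, and `P ^ n * (1 - G)` decays exponentially by Gelfand's formula.
-/

open Asymptotics Matrix Polynomial Set

theorem exists_aeval_X_mul_eq_zero_and_not_X_dvd {K A : Type*} [Field K] [Ring A] [Algebra K A]
    {x : A} (hx : IsIntegral K x) (hsq : ∀ y, x ^ 2 * y = 0 → x * y = 0) :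
    ∃ q : K[X], aeval x (X * q) = 0 ∧ ¬ X ∣ q := by
  by_cases hX : X ∣ minpoly K x
  · obtain ⟨q, hq⟩ := hX
    refine ⟨q, hq ▸ minpoly.aeval K x, ?_⟩
    rintro ⟨q', rfl⟩
    have hroot : aeval x (X * q') = 0 := by
      have h := minpoly.aeval K x
      rw [hq, ← mul_assoc, ← sq, map_mul, map_pow, aeval_X] at h
      simpa using hsq _ h
    have hne : X * q' ≠ 0 := right_ne_zero_of_mul (hq ▸ minpoly.ne_zero hx)
    have hdvd : X * (X * q') ∣ 1 * (X * q') := by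
      rw [one_mul, ← hq]
      exact minpoly.dvd K x hroot
    exact not_isUnit_X (isUnit_of_dvd_one ((mul_dvd_mul_iff_right hne).mp hdvd))
  · exact ⟨minpoly K x, by simp, hX⟩

theorem exists_sq_mul_aeval_eq_self {K A : Type*} [Field K] [Ring A] [Algebra K A] {x : A}
    (hx : IsIntegral K x) (hsq : ∀ y, x ^ 2 * y = 0 → x * y = 0) :
    ∃ p : K[X], x ^ 2 * aeval x p = x := by
  obtain ⟨q, hq, hXq⟩ := exists_aeval_X_mul_eq_zero_and_not_X_dvd hx hsq
  obtain ⟨p, t, hpt⟩ := irreducible_X.coprime_iff_not_dvd.mpr hXq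
  refine ⟨p, ?_⟩
  have bezout : X ^ 2 * p + X * q * t = X := by linear_combination X * hpt
  simpa only [map_add, map_mul _ (X * q), hq, zero_mul, add_zero, map_mul, map_pow, aeval_X]
    using congrArg (aeval x) bezout

theorem exists_isIdempotentElem_eq_mul {K A : Type*} [Field K] [Ring A] [Algebra K A] {x : A}
    (hx : IsIntegral K x) (hsq : ∀ y, x ^ 2 * y = 0 → x * y = 0) :
    ∃ e u : A, IsIdempotentElem e ∧ e = u * x ∧ x * e = x ∧ ∀ y, Commute x y → Commute e y := by
  obtain ⟨p, hp⟩ := exists_sq_mul_aeval_eq_self hx hsq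
  have hcomm (y : A) (hy : Commute x y) : Commute (aeval x p) y :=
    (Algebra.commute_of_mem_adjoin_singleton_of_commute (aeval_mem_adjoin_singleton K x)
      hy.symm).symm
  have hself := hcomm x (Commute.refl x)
  have absorb : x * (aeval x p * x) = x := by rw [hself.eq, ← mul_assoc, ← sq, hp]
  exact ⟨aeval x p * x, aeval x p, by rw [IsIdempotentElem, mul_assoc, absorb], rfl, absorb,
    fun y hy ↦ (hcomm y hy).mul_left hy⟩

theorem sub_one_mul_eq_zero_of_sq_mul_eq_zero {A : Type*} [NormedRing A] [NormedAlgebra ℚ A]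
    {x y : A} (hx : ‖x‖ ≤ 1) (hy : (x - 1) ^ 2 * y = 0) : (x - 1) * y = 0 := by
  set w := (x - 1) * y with hw
  have fixed : x * w = w := by
    rw [← sub_eq_zero, ← hy, hw]; noncomm_ring
  have pow_mul_eq (n : ℕ) : x ^ n * y = y + n • w := by
    induction n with
    | zero => simp
    | succ n ih =>
      have : x * y = y + w := by rw [hw]; noncomm_ring
      rw [pow_succ', mul_assoc, ih, mul_add, mul_smul_comm, fixed, this, succ_nsmul']
      abel
  have norm_pow_mul_le (n : ℕ) : ‖x ^ n * y‖ ≤ ‖y‖ := by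
    induction n with
    | zero => simp
    | succ n ih =>
      rw [pow_succ', mul_assoc]
      exact (norm_mul_le _ _).trans ((mul_le_of_le_one_left (norm_nonneg _) hx).trans ih)
  have bound (n : ℕ) : n * ‖w‖ ≤ 2 * ‖y‖ := calc
    n * ‖w‖ = ‖(n : ℚ) • w‖ := by simp [norm_smul, ← Rat.norm_cast_real]
    _ = ‖x ^ n * y - y‖ := by rw [pow_mul_eq, add_sub_cancel_left, Nat.cast_smul_eq_nsmul]
    _ ≤ 2 * ‖y‖ := by linarith [norm_sub_le (x ^ n * y) y, norm_pow_mul_le n]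
  by_contra hne
  obtain ⟨n, hn⟩ := exists_nat_gt (2 * ‖y‖ / ‖w‖)
  rw [div_lt_iff₀ (norm_pos_iff.mpr hne)] at hn
  exact (bound n).not_gt hn

theorem exists_pow_isBigO_of_spectrum_norm_lt_one {A : Type*} [NormedRing A] [NormedAlgebra ℂ A]
    [CompleteSpace A] {x : A} (hx : ∀ l ∈ spectrum ℂ x, ‖l‖ < 1) :
    ∃ r ∈ Ioo (0 : ℝ) 1, (fun n ↦ x ^ n) =O[atTop] fun n ↦ r ^ n := by
  rcases subsingleton_or_nontrivial A with _ | _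
  · exact ⟨1 / 2, by norm_num, (isBigO_zero _ _).congr_left fun _ ↦ Subsingleton.elim _ _⟩
  obtain ⟨r, hxr, hr1⟩ := ENNReal.lt_iff_exists_nnreal_btwn.mp
    (spectrum.spectralRadius_lt_of_forall_lt x (r := 1) hx)
  have hr0 : 0 < r := by exact_mod_cast (zero_le (a := spectralRadius ℂ x)).trans_lt hxr
  refine ⟨r, ⟨hr0, by exact_mod_cast hr1⟩, IsBigO.of_bound 1 ?_⟩
  have gelfand := spectrum.pow_nnnorm_pow_one_div_tendsto_nhds_spectralRadius x
  filter_upwards [gelfand.eventually_lt_const hxr, eventually_ge_atTop 1] with n hn hn1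
  have hn0 : (0 : ℝ) < n := by exact_mod_cast hn1
  rw [one_div, ENNReal.rpow_inv_lt_iff hn0, ENNReal.rpow_natCast] at hn
  have hle : ‖x ^ n‖ < (r : ℝ) ^ n := by exact_mod_cast hn
  simpa using hle.le

theorem eq_of_sum_smul_eq_of_norm_le {ι E : Type*} [Fintype ι] [NormedAddCommGroup E]
    [InnerProductSpace ℝ E] {w : ι → ℝ} (hw0 : ∀ i, 0 ≤ w i) (hw1 : ∑ i, w i = 1)
    {z : ι → E} {c : E} (hz : ∀ i, ‖z i‖ ≤ ‖c‖) (hc : ∑ i, w i • z i = c) {i : ι} (hi : w i ≠ 0) :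
    z i = c := by
  have variance : ∑ i, w i * ‖z i - c‖ ^ 2 = ∑ i, w i * ‖z i‖ ^ 2 - ‖c‖ ^ 2 := by
    have inner_sum : ∑ i, w i * inner ℝ (z i) c = ‖c‖ ^ 2 := by
      rw [← real_inner_self_eq_norm_sq]
      nth_rw 2 [← hc]
      simp [sum_inner, real_inner_smul_left]
    simp only [norm_sub_sq_real, mul_add, mul_sub, Finset.sum_add_distrib, Finset.sum_sub_distrib,
      mul_left_comm _ (2 : ℝ), ← Finset.mul_sum, ← Finset.sum_mul, hw1, inner_sum]
    ring
  have second_moment_le : ∑ i, w i * ‖z i‖ ^ 2 ≤ ‖c‖ ^ 2 := calc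
    ∑ i, w i * ‖z i‖ ^ 2 ≤ ∑ i, w i * ‖c‖ ^ 2 := by
      gcongr with i
      · exact hw0 i
      · exact hz i
    _ = ‖c‖ ^ 2 := by rw [← Finset.sum_mul, hw1, one_mul]
  have terms_nonneg (i : ι) : 0 ≤ w i * ‖z i - c‖ ^ 2 := mul_nonneg (hw0 i) (sq_nonneg _)
  have sum_eq_zero : ∑ i, w i * ‖z i - c‖ ^ 2 = 0 :=
    (variance.trans_le (sub_nonpos.mpr second_moment_le)).antisymm
      (Finset.sum_nonneg fun i _ ↦ terms_nonneg i)
  have term_eq_zero :=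
    (Finset.sum_eq_zero_iff_of_nonneg fun i _ ↦ terms_nonneg i).mp sum_eq_zero i (Finset.mem_univ i)
  simpa [hi, sub_eq_zero] using term_eq_zero

section RowStochastic

attribute [local instance] Matrix.linftyOpNormedRing Matrix.linftyOpNormedAlgebra

variable {S : Type*} [Fintype S] [DecidableEq S]

theorem sum_norm_row_le_linftyOpNorm {R : Type*} [NormedRing R] (M : Matrix S S R) (i : S) :
    ∑ j, ‖M i j‖ ≤ ‖M‖ := by
  have h := Finset.le_sup (f := fun i ↦ ∑ j, ‖M i j‖₊) (Finset.mem_univ i)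
  rw [← linfty_opNNNorm_def, ← NNReal.coe_le_coe] at h
  push_cast at h
  exact h

theorem norm_sum_row_smul_le {𝕜 E : Type*} [NormedField 𝕜] [SeminormedAddCommGroup E]
    [NormedSpace 𝕜 E] (M : Matrix S S 𝕜) (i : S) (f : S → E) :
    ‖∑ j, M i j • f j‖ ≤ ‖M‖ * ‖f‖ := calc
  ‖∑ j, M i j • f j‖ ≤ ∑ j, ‖M i j‖ * ‖f‖ := norm_sum_le_of_le _ fun j _ ↦ by
    rw [norm_smul]; gcongr; exact norm_le_pi_norm f j
  _ ≤ ‖M‖ * ‖f‖ := by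
    rw [← Finset.sum_mul]; gcongr; exact sum_norm_row_le_linftyOpNorm M i

theorem isBigO_sum_row_smul {α 𝕜 E F : Type*} [NormedField 𝕜] [SeminormedAddCommGroup E]
    [NormedSpace 𝕜 E] [Norm F] {l : Filter α} {M : α → Matrix S S 𝕜} {g : α → F}
    (hM : M =O[l] g) (i : S) (f : S → E) :
    (fun t ↦ ∑ j, M t i j • f j) =O[l] g :=
  .trans (.of_bound ‖f‖ <| .of_forall fun t ↦
    (norm_sum_row_smul_le (M t) i f).trans_eq (mul_comm _ _)) hM

theorem linftyOpNorm_map_algebraMap {𝕜 𝕜' : Type*} [NormedField 𝕜] [NormedField 𝕜']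
    [NormedAlgebra 𝕜 𝕜'] (M : Matrix S S 𝕜) : ‖M.map (algebraMap 𝕜 𝕜')‖ = ‖M‖ := by
  simp [linfty_opNorm_def, nnnorm_algebraMap']

theorem exists_eigenvector_of_mem_spectrum {K : Type*} [Field K] {M : Matrix S S K} {l : K}
    (hl : l ∈ spectrum K M) : ∃ v ≠ 0, M *ᵥ v = l • v := by
  rw [← spectrum_toLin', ← Module.End.hasEigenvalue_iff_mem_spectrum] at hl
  obtain ⟨v, hv⟩ := hl.exists_hasEigenvector
  exact ⟨v, hv.2, by simpa using hv.apply_eq_smul⟩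

theorem pow_mulVec_eq_pow_smul {R : Type*} [CommSemiring R] {M : Matrix S S R} {v : S → R} {l : R}
    (hv : M *ᵥ v = l • v) (n : ℕ) : (M ^ n) *ᵥ v = l ^ n • v := by
  induction n with
  | zero => simp
  | succ n ih => rw [pow_succ, ← mulVec_mulVec, hv, mulVec_smul, ih, smul_smul, pow_succ']

theorem norm_eigenvalue_le_one {𝕜 : Type*} [NormedField 𝕜] {M : Matrix S S 𝕜} (hM : ‖M‖ ≤ 1)
    {v : S → 𝕜} (hv0 : v ≠ 0) {l : 𝕜} (hv : M *ᵥ v = l • v) : ‖l‖ ≤ 1 := by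
  have h := linfty_opNorm_mulVec M v
  rw [hv, norm_smul] at h
  exact (le_of_mul_le_mul_right h (norm_pos_iff.mpr hv0)).trans hM

theorem norm_lt_one_of_mem_spectrum_mul_idempotent {M e u : Matrix S S ℂ} {a : ℕ} (hM : ‖M‖ ≤ 1)
    (hroot : ∀ (l : ℂ) (v : S → ℂ), v ≠ 0 → M *ᵥ v = l • v → ‖l‖ = 1 → l ^ a = 1)
    (he : IsIdempotentElem e) (hcomm : Commute e M) (hu : e = u * (M ^ a - 1)) :
    ∀ l ∈ spectrum ℂ (M * e), ‖l‖ < 1 := by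
  intro l hl
  obtain ⟨v, hv0, hv⟩ := exists_eigenvector_of_mem_spectrum hl
  by_contra! hl1
  have hl0 : l ≠ 0 := norm_pos_iff.mp (one_pos.trans_le hl1)
  have e_fixes : e *ᵥ v = v := by
    apply smul_right_injective _ hl0
    beta_reduce
    rw [← mulVec_smul, ← hv, mulVec_mulVec, ← mul_assoc, hcomm.eq, mul_assoc, he.eq]
  have eigen : M *ᵥ v = l • v := by rw [← hv, ← mulVec_mulVec, e_fixes]
  have unimodular : ‖l‖ = 1 := (norm_eigenvalue_le_one hM hv0 eigen).antisymm hl1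
  have e_kills : e *ᵥ v = 0 := by
    rw [hu, ← mulVec_mulVec, sub_mulVec, pow_mulVec_eq_pow_smul eigen,
      hroot l v hv0 eigen unimodular, one_smul, one_mulVec, sub_self, mulVec_zero]
  exact hv0 (e_fixes.symm.trans e_kills)

theorem eigenvector_eq_mul_of_norm_max {P : Matrix S S ℝ} (hP : P ∈ rowStochastic ℝ S)
    {l : ℂ} (hl : ‖l‖ = 1) {v : S → ℂ} (hv : P.map (algebraMap ℝ ℂ) *ᵥ v = l • v)
    {x y : S} (hx : ∀ z, ‖v z‖ ≤ ‖v x‖) (hxy : P x y ≠ 0) : v y = l * v x := by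
  refine eq_of_sum_smul_eq_of_norm_le (fun z ↦ nonneg_of_mem_rowStochastic hP)
    (sum_row_of_mem_rowStochastic hP x) (fun z ↦ ?_) ?_ hxy
  · rw [norm_mul, hl, one_mul]
    exact hx z
  · simpa [mulVec, dotProduct] using congrFun hv x

theorem exists_pow_eq_one_of_unimodular_eigenvalue {P : Matrix S S ℝ}
    (hP : P ∈ rowStochastic ℝ S) :
    ∃ a : ℕ, 0 < a ∧ ∀ (l : ℂ) (v : S → ℂ), v ≠ 0 → P.map (algebraMap ℝ ℂ) *ᵥ v = l • v →
      ‖l‖ = 1 → l ^ a = 1 := by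
  have exists_succ (x : S) : ∃ y, P x y ≠ 0 := by
    by_contra! h
    simpa [h] using sum_row_of_mem_rowStochastic hP x
  -- `σ` depends on `P` only, so one exponent serves all eigenvalues at once.
  choose σ hσ using exists_succ
  obtain ⟨m, n, hmn, hiter⟩ : ∃ m n, m < n ∧ σ^[m] = σ^[n] := by
    obtain ⟨m, n, hne, h⟩ := Finite.exists_ne_map_eq_of_infinite fun n : ℕ ↦ σ^[n]
    rcases hne.lt_or_gt with hlt | hlt
    · exact ⟨m, n, hlt, h⟩
    · exact ⟨n, m, hlt, h.symm⟩
  refine ⟨n - m, Nat.sub_pos_of_lt hmn, fun l v hv0 hv hl ↦ ?_⟩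
  obtain ⟨i, hi⟩ := Function.ne_iff.mp hv0
  have : Nonempty S := ⟨i⟩
  obtain ⟨x, hx⟩ := Finite.exists_max fun x ↦ ‖v x‖
  have hvx : v x ≠ 0 := norm_pos_iff.mp ((norm_pos_iff.mpr hi).trans_le (hx i))
  have orbit (j : ℕ) : v (σ^[j] x) = l ^ j * v x := by
    induction j with
    | zero => simp
    | succ j ih =>
      have still_max (z : S) : ‖v z‖ ≤ ‖v (σ^[j] x)‖ := by simpa [ih, hl] using hx z
      rw [Function.iterate_succ_apply', eigenvector_eq_mul_of_norm_max hP hl hv still_max (hσ _),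
        ih, pow_succ', mul_assoc]
  have hpow : l ^ m = l ^ n := mul_right_cancel₀ hvx (by rw [← orbit, ← orbit, hiter])
  have hl0 : l ≠ 0 := norm_pos_iff.mp (hl ▸ one_pos)
  rw [pow_sub₀ l hl0 hmn.le, ← hpow, mul_inv_cancel₀ (pow_ne_zero m hl0)]

theorem linftyOpNorm_le_one_of_mem_rowStochastic {P : Matrix S S ℝ} (hP : P ∈ rowStochastic ℝ S) :
    ‖P‖ ≤ 1 := by
  rw [linfty_opNorm_def, ← NNReal.coe_one, NNReal.coe_le_coe, Finset.sup_le_iff]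
  intro i _
  rw [← NNReal.coe_le_coe]
  push_cast
  simp [abs_of_nonneg (nonneg_of_mem_rowStochastic hP), sum_row_of_mem_rowStochastic hP]

theorem map_algebraMap_mem_rowStochastic {P : Matrix S S ℚ} (hP : P ∈ rowStochastic ℚ S) :
    P.map (algebraMap ℚ ℝ) ∈ rowStochastic ℝ S := by
  refine mem_rowStochastic_iff_sum.mpr ⟨fun i j ↦ ?_, fun i ↦ ?_⟩
  · simpa using nonneg_of_mem_rowStochastic hP
  · simpa using congrArg (algebraMap ℚ ℝ) (sum_row_of_mem_rowStochastic hP i)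

theorem exists_pow_mul_isBigO_of_mem_rowStochastic {P : Matrix S S ℚ}
    (hP : P ∈ rowStochastic ℚ S) :
    ∃ (a : ℕ) (G : Matrix S S ℚ), 0 < a ∧ P ^ a * G = G ∧
      ∃ r ∈ Ioo (0 : ℝ) 1, (fun n ↦ P ^ n * (1 - G)) =O[atTop] fun n ↦ r ^ n := by
  have norm_le_one {M : Matrix S S ℚ} (hM : M ∈ rowStochastic ℚ S) : ‖M‖ ≤ 1 := by
    rw [← linftyOpNorm_map_algebraMap (𝕜' := ℝ)]
    exact linftyOpNorm_le_one_of_mem_rowStochastic (map_algebraMap_mem_rowStochastic hM)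
  obtain ⟨a, ha, hroot⟩ :=
    exists_pow_eq_one_of_unimodular_eigenvalue (map_algebraMap_mem_rowStochastic hP)
  obtain ⟨e, u, he, heu, hfix, hcomm⟩ :=
    exists_isIdempotentElem_eq_mul (Algebra.IsIntegral.isIntegral (R := ℚ) (P ^ a - 1)) fun y ↦
      sub_one_mul_eq_zero_of_sq_mul_eq_zero (norm_le_one (pow_mem hP a))
  have hePcomm : Commute e P := hcomm P ((Commute.pow_left rfl a).sub_left (.one_left P))
  let φ : Matrix S S ℚ →+* Matrix S S ℂ := (algebraMap ℚ ℂ).mapMatrix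
  have map_map_eq : (P.map (algebraMap ℚ ℝ)).map (algebraMap ℝ ℂ) = φ P := by
    ext i j
    simp [φ]
  rw [map_map_eq] at hroot
  have norm_φ (M : Matrix S S ℚ) : ‖φ M‖ = ‖M‖ := linftyOpNorm_map_algebraMap M
  have : CompleteSpace (Matrix S S ℂ) := FiniteDimensional.complete ℂ _
  obtain ⟨r, hr, hdecay⟩ := exists_pow_isBigO_of_spectrum_norm_lt_one <|
    norm_lt_one_of_mem_spectrum_mul_idempotent (M := φ P) (e := φ e) (u := φ u) (a := a)
      ((norm_φ P).trans_le (norm_le_one hP)) hroot (he.map φ) (hePcomm.map φ)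
      (by rw [← map_one φ, ← map_pow, ← map_sub, ← map_mul, ← heu])
  refine ⟨a, 1 - e, ha, ?_, r, hr, ?_⟩
  · rw [← sub_eq_zero, ← sub_one_mul, mul_sub, mul_one, hfix, sub_self]
  have pow_mul_eq (n : ℕ) : P ^ n * (1 - (1 - e)) = (P * e) ^ n * e := by
    rw [sub_sub_cancel, hePcomm.symm.mul_pow, mul_assoc, ← pow_succ, he.pow_succ_eq]
  simp only [pow_mul_eq]
  refine IsBigO.trans (IsBigO.of_bound ‖e‖ <| .of_forall fun n ↦ ?_) hdecay
  rw [← map_mul, ← map_pow, norm_φ, mul_comm]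
  exact norm_mul_le _ _

end RowStochastic

theorem IsAutomaticSeq.exists_run {Δ : Type*} {k : ℕ} (hk : 2 ≤ k) {h : ℕ → Δ}
    (hauto : IsAutomaticSeq k h) :
    ∃ (S : Type) (_ : Fintype S) (δ : S → ℕ → S) (run : ℕ → S) (τ : S → Δ),
      (∀ n, ∀ d < k, run (k * n + d) = δ (run n) d) ∧ h = τ ∘ run := by
  obtain ⟨Q, _, q₀, δ, τ, hτ⟩ := hauto
  -- The extra state `none` absorbs leading zeros, on which `δ` need not fix `q₀`.
  let δ' : Option Q → ℕ → Option Q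
    | none, d => if d = 0 then none else some (δ q₀ d)
    | some q, d => some (δ q d)
  let run (n : ℕ) : Option Q := if n = 0 then none else some ((Nat.digits k n).reverse.foldl δ q₀)
  refine ⟨Option Q, inferInstance, δ', run, fun q ↦ τ (q.getD q₀), fun n d hd ↦ ?_, ?_⟩
  · rcases eq_or_ne (k * n + d) 0 with h0 | h0
    · obtain ⟨rfl, rfl⟩ : n = 0 ∧ d = 0 := by simpa [show k ≠ 0 by lia] using h0
      simp [run, δ']
    · have hdigits : Nat.digits k (k * n + d) = d :: Nat.digits k n := by
        rw [add_comm]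
        exact Nat.digits_add k hk d n hd (by by_contra! h; simp [h] at h0)
      rcases eq_or_ne n 0 with rfl | hn
      · simp_all [run, δ']
      · simp only [run, δ', h0, hn, hdigits, if_false, List.reverse_cons, List.foldl_append,
          List.foldl_cons, List.foldl_nil]
  · funext n
    rcases eq_or_ne n 0 with rfl | hn <;> simp [run, *]

/-- The transition matrix of the Markov chain that moves along `δ` by a uniformly random digit
`d < k`: its `(q, q')` entry is the proportion of digits leading from `q` to `q'`. Digits `d ≥ k`,
on which `δ` takes arbitrary values, are ignored. -/
def transitionMatrix {S : Type*} [DecidableEq S] (k : ℕ) (δ : S → ℕ → S) : Matrix S S ℚ :=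
  of fun q q' ↦ (k : ℚ)⁻¹ * ((Finset.range k).filter fun d ↦ δ q d = q').card

section TransitionSums

variable {S : Type*} [Fintype S] [DecidableEq S] {k : ℕ} (δ : S → ℕ → S)
  {E : Type*} [AddCommGroup E] [Module ℚ E]

theorem sum_transition_eq_smul (hk : k ≠ 0) (f : S → E) (q : S) :
    ∑ d ∈ Finset.range k, f (δ q d) = (k : ℚ) • ∑ q', transitionMatrix k δ q q' • f q' := by
  have hk' : (k : ℚ) ≠ 0 := Nat.cast_ne_zero.mpr hk
  simp only [transitionMatrix, of_apply, Finset.smul_sum, smul_smul, mul_inv_cancel_left₀ hk',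
    Nat.cast_smul_eq_nsmul]
  simp only [← Finset.sum_const, Finset.sum_fiberwise']

theorem transitionMatrix_mem_rowStochastic (hk : k ≠ 0) :
    transitionMatrix k δ ∈ rowStochastic ℚ S := by
  refine mem_rowStochastic_iff_sum.mpr ⟨fun q q' ↦ ?_, fun q ↦ ?_⟩
  · simp only [transitionMatrix, of_apply]
    positivity
  · have hk' : (k : ℚ) ≠ 0 := Nat.cast_ne_zero.mpr hk
    simpa [hk'] using (sum_transition_eq_smul δ hk (fun _ ↦ (1 : ℚ)) q).symm

theorem sum_range_mul_run_eq_smul (hk : k ≠ 0) {run : ℕ → S}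
    (hrun : ∀ n, ∀ d < k, run (k * n + d) = δ (run n) d) (f : S → E) (N : ℕ) :
    ∑ n ∈ Finset.range (k * N), f (run n) =
      (k : ℚ) • ∑ n ∈ Finset.range N, ∑ q, transitionMatrix k δ (run n) q • f q := by
  induction N with
  | zero => simp
  | succ N ih =>
    rw [Nat.mul_succ, Finset.sum_range_add, ih, Finset.sum_range_succ, smul_add,
      ← sum_transition_eq_smul δ hk]
    congr 1
    exact Finset.sum_congr rfl fun d hd ↦ by rw [hrun N d (Finset.mem_range.mp hd)]

theorem sum_range_pow_run_eq_smul (hk : k ≠ 0) {run : ℕ → S}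
    (hrun : ∀ n, ∀ d < k, run (k * n + d) = δ (run n) d) (f : S → E) (m : ℕ) :
    ∑ n ∈ Finset.range (k ^ m), f (run n) =
      (k : ℚ) ^ m • ∑ q, (transitionMatrix k δ ^ m) (run 0) q • f q := by
  induction m generalizing f with
  | zero => simp [one_apply]
  | succ m ih =>
    rw [pow_succ', sum_range_mul_run_eq_smul δ hk hrun,
      ih fun q ↦ ∑ q', transitionMatrix k δ q q' • f q', smul_smul, ← pow_succ']
    simp only [pow_succ (transitionMatrix k δ), mul_apply, Finset.sum_smul, Finset.smul_sum,
      smul_smul]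
    rw [Finset.sum_comm]

end TransitionSums

section AutomaticSums

attribute [local instance] Matrix.linftyOpNormedRing

theorem IsAutomaticSeq.exists_sum_range_pow_sub_isBigO {E : Type*} [SeminormedAddCommGroup E]
    [NormedSpace ℚ E] {k : ℕ} (hk : 2 ≤ k) {h : ℕ → E} (hauto : IsAutomaticSeq k h) :
    ∃ (a : ℕ) (c : ℕ → E), 0 < a ∧ c.Periodic a ∧ ∃ β ∈ Ioo (0 : ℝ) k,
      (fun m ↦ ∑ i ∈ Finset.range (k ^ m), h i - (k : ℚ) ^ m • c m) =O[atTop] fun m ↦ β ^ m := by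
  classical
  have hk0 : k ≠ 0 := by lia
  obtain ⟨S, _, δ, run, τ, hrun, rfl⟩ := hauto.exists_run hk
  set P := transitionMatrix k δ
  obtain ⟨a, G, ha, hG, r, hr, hdecay⟩ :=
    exists_pow_mul_isBigO_of_mem_rowStochastic (transitionMatrix_mem_rowStochastic δ hk0)
  refine ⟨a, fun m ↦ ∑ q, (P ^ m * G) (run 0) q • τ q, ha, fun m ↦ ?_, k * r, ?_, ?_⟩
  · simp only [pow_add, mul_assoc, P, hG]
  · have : (0 : ℝ) < k := by positivity
    exact ⟨by have := hr.1; positivity, mul_lt_of_lt_one_right this hr.2⟩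
  have error_eq (m : ℕ) : ∑ i ∈ Finset.range (k ^ m), (τ ∘ run) i -
      (k : ℚ) ^ m • ∑ q, (P ^ m * G) (run 0) q • τ q =
      (k : ℚ) ^ m • ∑ q, (P ^ m * (1 - G)) (run 0) q • τ q := by
    simp only [Function.comp_apply, sum_range_pow_run_eq_smul δ hk0 hrun τ m, P, ← smul_sub,
      ← Finset.sum_sub_distrib, ← sub_smul, mul_sub, mul_one, Matrix.sub_apply]
  have natCast_pow_isBigO : (fun m ↦ (k : ℚ) ^ m) =O[atTop] fun m ↦ (k : ℝ) ^ m :=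
    isBigO_of_le _ fun m ↦ by simp [← Rat.norm_cast_real]
  simpa only [error_eq, mul_pow, smul_eq_mul] using
    natCast_pow_isBigO.smul (isBigO_sum_row_smul hdecay (run 0) τ)

end AutomaticSums

theorem partial_sums_automatic_asymptotics_general {E : Type*} [SeminormedAddCommGroup E]
    [NormedSpace ℚ E] (k : ℕ) (hk : 2 ≤ k) (h : ℕ → E) (hauto : IsAutomaticSeq k h) :
    ∃ (β C : ℝ) (a : ℕ) (c : ℕ → E),
      0 < β ∧ β < (k : ℝ) ∧ 0 < C ∧ 1 ≤ a ∧
      ∀ n : ℕ, ∀ j < a,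
        ‖∑ i ∈ Finset.range (k ^ (a * n + j)), h i - (k : ℚ) ^ (a * n + j) • c j‖ <
          C * β ^ (a * n) := by
  obtain ⟨a, c, ha, hc, β, ⟨hβ0, hβk⟩, hO⟩ := hauto.exists_sum_range_pow_sub_isBigO hk
  obtain ⟨C, hC, hbound⟩ := bound_of_isBigO_nat_atTop hO
  refine ⟨β, C * k ^ a + 1, a, c, hβ0, hβk, by positivity, ha, fun n j hj ↦ ?_⟩
  have hcj : c (a * n + j) = c j := by
    rw [add_comm, mul_comm]
    exact hc.nat_mul n j
  have hβj : β ^ j ≤ (k : ℝ) ^ a := calc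
    β ^ j ≤ (k : ℝ) ^ j := by gcongr
    _ ≤ (k : ℝ) ^ a := by gcongr; exact_mod_cast (by lia : 1 ≤ k)
  have h := hbound (x := a * n + j) (by positivity)
  rw [hcj, norm_pow, Real.norm_of_nonneg hβ0.le] at h
  calc _ ≤ C * β ^ (a * n + j) := h
    _ = C * β ^ j * β ^ (a * n) := by ring
    _ ≤ C * (k : ℝ) ^ a * β ^ (a * n) := by gcongr
    _ < (C * (k : ℝ) ^ a + 1) * β ^ (a * n) := by gcongr; simp

theorem partial_sums_automatic_asymptotics
    (k : ℕ) (hk : 2 ≤ k) (h : ℕ → ℚ) (hauto : IsAutomaticSeq k h)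
    (hnn : ∀ n, 0 ≤ h n)
    (s : ℕ → ℚ) (hs : ∀ n, s n = ∑ j ∈ Finset.range n, h j) :
    ∃ (β C : ℝ) (a : ℕ) (c : ℕ → ℚ),
      0 < β ∧ β < (k : ℝ) ∧ 0 < C ∧ 1 ≤ a ∧
      ∀ n : ℕ, ∀ j < a,
        |(s (k ^ (a * n + j)) : ℝ) - (c j : ℝ) * (k : ℝ) ^ (a * n + j)| < C * β ^ (a * n) := by
  simpa [hs, ← Rat.norm_cast_real, mul_comm] using
    partial_sums_automatic_asymptotics_general k hk h hauto
end
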